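/- arXiv:1610.03712 — 5 statements merged into one kernel-verified Lean document; each statement's English description precedes it below -/
import Mathlib

section
/- Let F₂ be the free group of rank 2 and let α be an automorphism of F₂ whose image in the outer automorphism group Out(F₂) = Aut(F₂)/Inn(F₂) has finite order. Then the semidirect product F₂ ⋊_α ℤ admits an injective group homomorphism into GL(2,ℂ). -/
open scoped MatrixGroups

/-!
An intertwiner `T ∈ GL(2,ℚ)` with `T ρ(g) T⁻¹ = ρ(α g)`, for a faithful representation `ρ` of `F₂`
of determinant one, can be scaled so that `det T` has infinite order; then `(g, n) ↦ ρ(g) Tⁿ` is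
injective on `F₂ ⋊_α ℤ`. To find `ρ` and `T`, note that the action of `α` on the abelianization has
finite order, so after a change of basis of `F₂` it is an isometry of the square or of the hexagonal
lattice.

* Hexagonal lattice: let `ρ` be the embedding of `F₂` as the commutator subgroup of `SL(2,ℤ)`. This
  subgroup is normal in `GL(2,ℤ)`, so conjugation by `GL(2,ℤ)` induces automorphisms of `F₂`, among
  them one of order six modulo inner automorphisms.
* Square lattice: let `ρ` send the two generators to hyperbolic translations of equal length with
  perpendicular axes; the symmetries of the pair of axes induce the signed permutations of the
  generators.

Both cases need that an automorphism is determined, up to an inner one, by its action on the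
abelianization. The traces of `ρ(α a)`, `ρ(α b)`, `ρ(α (ab))` in the hexagonal representation solve
the Markov equation `x² + y² + z² = xyz`. Descent on its solutions shows that a trace that can be
lowered belongs to a word whose exponents are large in the hexagonal quadratic form, so an `α`
preserving that form has all three traces equal to `±3`. The images of `a` and `b` are then
conjugate in `SL(2,ℤ)`, up to order and sign, to the original pair.
-/

namespace FreeTwo

section Intertwining

variable {G H : Type*} [Group G] [Group H]

/-- The pairs `(T, α)` such that conjugation by `T` induces the automorphism `α` of `G` through
the representation `ρ`. -/
def intertwiners (ρ : G →* H) : Subgroup (H × MulAut G) where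
  carrier := {p | ∀ g, p.1 * ρ g * p.1⁻¹ = ρ (p.2 g)}
  one_mem' _ := by simp
  mul_mem' {p q} hp hq g := by
    rw [Prod.snd_mul, MulAut.mul_apply, ← hp, ← hq, Prod.fst_mul]
    group
  inv_mem' {p} hp g := by
    rw [Prod.snd_inv, ← (MulAut.apply_inv_self _ p.2 g ▸ hp (p.2⁻¹ g) :), Prod.fst_inv]
    group

variable {ρ : G →* H} {T : H} {α : MulAut G}

lemma mem_intertwiners : (T, α) ∈ intertwiners ρ ↔ ∀ g, T * ρ g * T⁻¹ = ρ (α g) := Iff.rfl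

lemma conj_mem_intertwiners (ρ : G →* H) (g : G) : (ρ g, MulAut.conj g) ∈ intertwiners ρ := by
  simp [mem_intertwiners]

lemma map_mem_intertwiners {H' : Type*} [Group H'] (f : H →* H')
    (h : (T, α) ∈ intertwiners ρ) : (f T, α) ∈ intertwiners (f.comp ρ) := fun g ↦ by
  simpa using congrArg f (h g)

lemma mem_intertwiners_comp_of_conj (β : MulAut G) (h : (T, β⁻¹ * α * β) ∈ intertwiners ρ) :
    (T, α) ∈ intertwiners (ρ.comp (β⁻¹ : MulAut G).toMonoidHom) := fun g ↦ by
  simpa [MulAut.mul_apply] using h (β⁻¹ g)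

-- The determinant-like map `d` kills the image of `G` and detects the `ℤ`-coordinate.
lemma exists_injective_semidirect_hom {A : Type*} [Group A] (hρ : Function.Injective ρ)
    (hT : (T, α) ∈ intertwiners ρ) (d : H →* A) (hd : ∀ g, d (ρ g) = 1)
    (hdT : ¬ IsOfFinOrder (d T)) :
    ∃ ψ : G ⋊[zpowersHom (MulAut G) α] Multiplicative ℤ →* H, Function.Injective ψ := by
  refine ⟨SemidirectProduct.lift ρ (zpowersHom H T) fun n ↦ MonoidHom.ext fun g ↦ ?_, ?_⟩
  · exact (zpow_mem hT n.toAdd g).symm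
  refine (injective_iff_map_eq_one _).2 fun ⟨g, n⟩ h ↦ ?_
  replace h : ρ g * T ^ n.toAdd = 1 := h
  have hn : n.toAdd = 0 := by
    have hdn : d T ^ n.toAdd = 1 := by simpa [hd] using congrArg d h
    exact injective_zpow_iff_not_isOfFinOrder.2 hdT (by simpa using hdn)
  rw [hn, zpow_zero, mul_one] at h
  exact SemidirectProduct.ext (hρ (h.trans (map_one ρ).symm)) (Multiplicative.toAdd.injective hn)

end Intertwining

section Scaling

open Matrix

variable {G n K : Type*} [Group G] [Fintype n] [DecidableEq n] [Field K] {ρ : G →* GL n K}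
  {T : GL n K} {α : MulAut G}

lemma scalar_mul_mem_intertwiners (c : Kˣ) (hT : (T, α) ∈ intertwiners ρ) :
    (GeneralLinearGroup.scalar n c * T, α) ∈ intertwiners ρ := by
  have hc : (GeneralLinearGroup.scalar n c, (1 : MulAut G)) ∈ intertwiners ρ := fun g ↦ by
    rw [GeneralLinearGroup.scalar_commute, mul_inv_cancel_right, MulAut.one_apply]
  simpa using mul_mem hc hT

variable [LinearOrder K] [IsStrictOrderedRing K]

lemma not_isOfFinOrder_units_of_abs_ne_one {u : Kˣ} (hu : |(u : K)| ≠ 1) : ¬ IsOfFinOrder u := by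
  intro h
  obtain ⟨k, hk, huk⟩ := isOfFinOrder_iff_pow_eq_one.1 h
  have habs : |(u : K)| ^ k = 1 := by rw [← abs_pow, ← Units.val_pow_eq_pow_val, huk]; simp
  exact hu ((pow_eq_one_iff_of_nonneg (abs_nonneg _) hk.ne').1 habs)

-- If `|det T| = 1`, the determinant of the intertwiner `2 • T` has infinite order instead.
lemma exists_injective_semidirect_hom_GL [Nonempty n] (hρ : Function.Injective ρ)
    (hdet : ∀ g, (ρ g).det = 1) (hT : (T, α) ∈ intertwiners ρ) :
    ∃ ψ : G ⋊[zpowersHom (MulAut G) α] Multiplicative ℤ →* GL n K, Function.Injective ψ := by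
  by_cases habs : |((T.det : Kˣ) : K)| = 1
  · refine exists_injective_semidirect_hom hρ
      (scalar_mul_mem_intertwiners (Units.mk0 2 two_ne_zero) hT) GeneralLinearGroup.det hdet
      (not_isOfFinOrder_units_of_abs_ne_one ?_)
    rw [map_mul, GeneralLinearGroup.det_scalar, Units.val_mul, abs_mul, habs, mul_one]
    simp only [Units.val_pow_eq_pow_val, Units.val_mk0, abs_pow, Nat.abs_ofNat]
    exact (one_lt_pow₀ one_lt_two Fintype.card_ne_zero).ne'
  · exact exists_injective_semidirect_hom hρ hT GeneralLinearGroup.det hdet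
      (not_isOfFinOrder_units_of_abs_ne_one habs)

end Scaling

/-- The free group of rank two. -/
abbrev F₂ := FreeGroup (Fin 2)

/-- The first standard generator of `F₂`. -/
abbrev a : F₂ := .of 0

/-- The second standard generator of `F₂`. -/
abbrev b : F₂ := .of 1

section Automorphisms

lemma hom_ext {M : Type*} [Monoid M] {f g : F₂ →* M} (ha : f a = g a) (hb : f b = g b) : f = g :=
  FreeGroup.ext_hom f g (Fin.forall_fin_two.2 ⟨ha, hb⟩)

lemma aut_ext {α β : MulAut F₂} (ha : α a = β a) (hb : α b = β b) : α = β :=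
  MulEquiv.toMonoidHom_injective (hom_ext ha hb)

/-- The automorphism `a ↦ ab`, `b ↦ a⁻¹`. It permutes `a`, `ab`, `b` and their inverses cyclically
up to conjugacy, and its image in `GL(2,ℤ)` is the rotation of order six of the hexagonal
lattice. -/
def hexRot : MulAut F₂ :=
  MonoidHom.toMulEquiv (FreeGroup.lift ![a * b, a⁻¹]) (FreeGroup.lift ![b⁻¹, b * a])
    (hom_ext (by simp) (by simp)) (hom_ext (by simp) (by simp))

/-- The automorphism exchanging the two generators. -/
def swap : MulAut F₂ :=
  MonoidHom.toMulEquiv (FreeGroup.lift ![b, a]) (FreeGroup.lift ![b, a])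
    (hom_ext (by simp) (by simp)) (hom_ext (by simp) (by simp))

/-- The automorphism inverting the second generator. -/
def flip : MulAut F₂ :=
  MonoidHom.toMulEquiv (FreeGroup.lift ![a, b⁻¹]) (FreeGroup.lift ![a, b⁻¹])
    (hom_ext (by simp) (by simp)) (hom_ext (by simp) (by simp))

@[simp] lemma hexRot_a : hexRot a = a * b := by simp [hexRot]

@[simp] lemma hexRot_b : hexRot b = a⁻¹ := by simp [hexRot]

@[simp] lemma swap_a : swap a = b := by simp [swap]

@[simp] lemma swap_b : swap b = a := by simp [swap]

@[simp] lemma flip_a : flip a = a := by simp [flip]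

@[simp] lemma flip_b : flip b = b⁻¹ := by simp [flip]

lemma swap_mul_swap : swap * swap = 1 := aut_ext (by simp) (by simp)

lemma hexRot_pow_six : hexRot ^ 6 = MulAut.conj (a * b * a⁻¹ * b⁻¹) :=
  aut_ext (by simp [pow_succ, MulAut.mul_apply, mul_assoc])
    (by simp [pow_succ, MulAut.mul_apply, mul_assoc])

instance normal_range_conj {G : Type*} [Group G] :
    (MulAut.conj : G →* MulAut G).range.Normal where
  conj_mem := by
    rintro _ ⟨g, rfl⟩ δ
    exact ⟨δ g, by ext; simp [MulAut.mul_apply]⟩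

end Automorphisms

section Abelianization

/-- The exponent sums of the two generators in a word. -/
def exponents (w : F₂) : Fin 2 → ℤ :=
  (FreeGroup.lift (fun i ↦ Multiplicative.ofAdd (Pi.single i 1 : Fin 2 → ℤ)) w).toAdd

@[simp] lemma exponents_of (i : Fin 2) : exponents (.of i) = Pi.single i 1 := by simp [exponents]

@[simp] lemma exponents_one : exponents 1 = 0 := by simp [exponents]

@[simp] lemma exponents_mul (u v : F₂) : exponents (u * v) = exponents u + exponents v := by
  simp [exponents]

@[simp] lemma exponents_inv (u : F₂) : exponents u⁻¹ = -exponents u := by simp [exponents]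

open Matrix

lemma exponents_apply (α : MulAut F₂) (w : F₂) :
    exponents (α w) = (Matrix.of fun i j ↦ exponents (α (.of j)) i) *ᵥ exponents w := by
  induction w using FreeGroup.induction_on with
  | C1 => simp
  | of i => simp [funext_iff]
  | inv_of i ih => simp [mulVec_neg, ih]
  | mul u v hu hv => simp [mulVec_add, hu, hv]

/-- The action of automorphisms of `F₂` on its abelianization `ℤ²`: the columns are the exponent
sums of the images of the generators. -/
def abMatrix : MulAut F₂ →* GL (Fin 2) ℤ := MonoidHom.toHomUnits
  { toFun α := Matrix.of fun i j ↦ exponents (α (.of j)) i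
    map_one' := by ext i j; simp [Matrix.one_apply, Pi.single_apply]
    map_mul' α β := by
      ext i j
      simp [MulAut.mul_apply, exponents_apply α (β _), Matrix.mul_apply, mulVec, dotProduct] }

lemma abMatrix_apply (α : MulAut F₂) (i j : Fin 2) :
    (abMatrix α).1 i j = exponents (α (.of j)) i := rfl

lemma exponents_aut (α : MulAut F₂) (w : F₂) : exponents (α w) = (abMatrix α).1 *ᵥ exponents w :=
  exponents_apply α w

@[simp] lemma abMatrix_conj (g : F₂) : abMatrix (MulAut.conj g) = 1 := by
  ext i j
  simp [abMatrix_apply, Matrix.one_apply, Pi.single_apply]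

lemma coe_abMatrix_hexRot : (abMatrix hexRot).1 = !![1, -1; 1, 0] := by
  ext i j
  fin_cases i <;> fin_cases j <;> simp [abMatrix_apply]

lemma coe_abMatrix_swap : (abMatrix swap).1 = !![0, 1; 1, 0] := by
  ext i j
  fin_cases i <;> fin_cases j <;> simp [abMatrix_apply]

lemma coe_abMatrix_flip : (abMatrix flip).1 = !![1, 0; 0, -1] := by
  ext i j
  fin_cases i <;> fin_cases j <;> simp [abMatrix_apply]

lemma exists_abMatrix_eq (P : SL(2, ℤ)) : ∃ β, abMatrix β = P.toGL := by
  suffices abMatrix.range.comap Matrix.SpecialLinearGroup.toGL = ⊤ from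
    (this ▸ Subgroup.mem_top P : P ∈ abMatrix.range.comap Matrix.SpecialLinearGroup.toGL)
  rw [eq_top_iff, ← SpecialLinearGroup.SL2Z_generators, Subgroup.closure_le]
  rintro _ (rfl | rfl)
  · refine ⟨swap * flip, Units.ext ?_⟩
    rw [map_mul, Units.val_mul, coe_abMatrix_swap, coe_abMatrix_flip]
    decide
  · refine ⟨hexRot * (swap * flip)⁻¹, ?_⟩
    rw [map_mul, map_inv, mul_inv_eq_iff_eq_mul]
    refine Units.ext ?_
    rw [map_mul, Units.val_mul, Units.val_mul, coe_abMatrix_swap, coe_abMatrix_flip,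
      coe_abMatrix_hexRot]
    decide

end Abelianization

section HexNorm

/-- The hexagonal quadratic form `x² - xy + y²` evaluated at the exponent sums of a word. -/
def hexNorm (w : F₂) : ℤ :=
  exponents w 0 ^ 2 - exponents w 0 * exponents w 1 + exponents w 1 ^ 2

@[simp] lemma hexNorm_a : hexNorm a = 1 := by simp [hexNorm]

@[simp] lemma hexNorm_b : hexNorm b = 1 := by simp [hexNorm]

@[simp] lemma hexNorm_ab : hexNorm (a * b) = 1 := by simp [hexNorm]

lemma hexNorm_inv (u : F₂) : hexNorm u⁻¹ = hexNorm u := by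
  simp [hexNorm]

lemma hexNorm_mul_inv (u v : F₂) :
    hexNorm (u * v⁻¹) = 2 * hexNorm u + 2 * hexNorm v - hexNorm (u * v) := by
  simp only [hexNorm, exponents_mul, exponents_inv, Pi.add_apply, Pi.neg_apply]
  ring

lemma hexNorm_nonneg (u : F₂) : 0 ≤ hexNorm u := by
  rw [hexNorm]
  nlinarith [sq_nonneg (exponents u 0 - exponents u 1), sq_nonneg (exponents u 0 + exponents u 1)]

lemma hexNorm_hexRot (w : F₂) : hexNorm (hexRot w) = hexNorm w := by
  simp only [hexNorm, exponents_aut, coe_abMatrix_hexRot, Matrix.mulVec, dotProduct,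
    Fin.sum_univ_two, Matrix.of_apply, Matrix.cons_val_zero, Matrix.cons_val_one]
  ring

lemma hexNorm_swap (w : F₂) : hexNorm (swap w) = hexNorm w := by
  simp only [hexNorm, exponents_aut, coe_abMatrix_swap, Matrix.mulVec, dotProduct,
    Fin.sum_univ_two, Matrix.of_apply, Matrix.cons_val_zero, Matrix.cons_val_one]
  ring

lemma hexNorm_conj (g w : F₂) : hexNorm (g * w * g⁻¹) = hexNorm w := by
  simp [hexNorm]

end HexNorm

section HexGroup

/-- The automorphisms of `F₂` that are, up to inner automorphisms, powers of `hexRot`. -/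
def hexGroup : Subgroup (MulAut F₂) := MulAut.conj.range ⊔ Subgroup.zpowers hexRot

lemma conj_mem_hexGroup (g : F₂) : MulAut.conj g ∈ hexGroup :=
  Subgroup.mem_sup_left ⟨g, rfl⟩

lemma hexRot_mem_hexGroup : hexRot ∈ hexGroup :=
  Subgroup.mem_sup_right (Subgroup.mem_zpowers hexRot)

lemma exists_conj_mul_pow_of_mem_hexGroup {α : MulAut F₂} (hα : α ∈ hexGroup) :
    ∃ g, ∃ i < 6, α = MulAut.conj g * hexRot ^ i := by
  obtain ⟨_, ⟨g, rfl⟩, _, ⟨j, rfl⟩, rfl⟩ := Subgroup.mem_sup_of_normal_left.1 hα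
  lift j % 6 to ℕ using Int.emod_nonneg j (by norm_num) with i hi
  refine ⟨g * (a * b * a⁻¹ * b⁻¹) ^ (j / 6), i, by omega, ?_⟩
  rw [map_mul, map_zpow, ← hexRot_pow_six, mul_assoc, ← zpow_natCast, ← zpow_natCast, ← zpow_mul,
    ← zpow_add, hi]
  congr 2
  push_cast
  exact (Int.mul_ediv_add_emod j 6).symm

lemma hexNorm_apply_of_mem_hexGroup {κ : MulAut F₂} (hκ : κ ∈ hexGroup) (w : F₂) :
    hexNorm (κ w) = hexNorm w := by
  obtain ⟨g, i, -, rfl⟩ := exists_conj_mul_pow_of_mem_hexGroup hκ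
  clear hκ
  rw [MulAut.mul_apply, MulAut.conj_apply, hexNorm_conj]
  induction i with
  | zero => simp
  | succ i ih => rw [pow_succ', MulAut.mul_apply, hexNorm_hexRot, ih]

lemma det_abMatrix_of_mem_hexGroup {κ : MulAut F₂} (hκ : κ ∈ hexGroup) :
    (abMatrix κ).1.det = 1 := by
  obtain ⟨g, i, -, rfl⟩ := exists_conj_mul_pow_of_mem_hexGroup hκ
  simp [coe_abMatrix_hexRot]

lemma mem_range_conj_of_mem_hexGroup {κ : MulAut F₂} (hκ : κ ∈ hexGroup) (h : abMatrix κ = 1) :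
    κ ∈ MulAut.conj.range := by
  obtain ⟨g, i, hi, rfl⟩ := exists_conj_mul_pow_of_mem_hexGroup hκ
  have hpow : !![1, -1; 1, (0 : ℤ)] ^ i = 1 := by
    simpa [coe_abMatrix_hexRot] using congrArg Units.val h
  obtain rfl : i = 0 := by
    revert hpow
    interval_cases i <;> decide
  exact ⟨g, by simp⟩

end HexGroup

section TraceIdentities

open Matrix

variable {R : Type*} [CommRing R]

lemma coe_inv_eq_trace_smul_one_sub (U : SL(2, R)) :
    (U⁻¹ : SL(2, R)).1 = U.1.trace • 1 - U.1 := by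
  ext i j
  fin_cases i <;> fin_cases j <;>
    simp [Matrix.SpecialLinearGroup.SL2_inv_expl, trace_fin_two]

lemma trace_inv (U : SL(2, R)) : (U⁻¹ : SL(2, R)).1.trace = U.1.trace := by
  rw [coe_inv_eq_trace_smul_one_sub, trace_sub, trace_smul, trace_one, Fintype.card_fin]
  simp [mul_two]

lemma trace_mul_inv (U V : SL(2, R)) :
    (U * V⁻¹).1.trace = U.1.trace * V.1.trace - (U * V).1.trace := by
  rw [Matrix.SpecialLinearGroup.coe_mul, coe_inv_eq_trace_smul_one_sub, mul_sub, trace_sub,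
    mul_smul_comm, mul_one, trace_smul, smul_eq_mul, mul_comm, Matrix.SpecialLinearGroup.coe_mul]

lemma trace_conj (U V : SL(2, R)) : (U * V * U⁻¹).1.trace = V.1.trace := by
  rw [Matrix.SpecialLinearGroup.coe_mul, trace_mul_comm, ← Matrix.SpecialLinearGroup.coe_mul,
    inv_mul_cancel_left]

lemma mul_self_eq (U : SL(2, R)) : U.1 * U.1 = U.1.trace • U.1 - 1 := by
  have h : U.1 * (U⁻¹ : SL(2, R)).1 = 1 := by
    rw [← Matrix.SpecialLinearGroup.coe_mul, mul_inv_cancel, Matrix.SpecialLinearGroup.coe_one]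
  rw [coe_inv_eq_trace_smul_one_sub, mul_sub, mul_smul_comm, mul_one, sub_eq_iff_eq_add] at h
  rw [h, add_sub_cancel_left]

/-- The Fricke identity. -/
lemma det_lie (A B : Matrix (Fin 2) (Fin 2) R) :
    ⁅A, B⁆.det = 4 * A.det * B.det + A.trace * B.trace * (A * B).trace
      - A.trace ^ 2 * B.det - B.trace ^ 2 * A.det - (A * B).trace ^ 2 := by
  simp only [Ring.lie_def, det_fin_two, trace_fin_two, Matrix.sub_apply, mul_apply,
    Fin.sum_univ_two]
  ring

lemma lie_mul_self (U : SL(2, R)) (B : Matrix (Fin 2) (Fin 2) R) :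
    ⁅U.1, B⁆ * U.1 = (U⁻¹ : SL(2, R)).1 * ⁅U.1, B⁆ := by
  have h := mul_self_eq U
  rw [coe_inv_eq_trace_smul_one_sub, Ring.lie_def, sub_mul, mul_assoc B, h, sub_mul, smul_one_mul,
    mul_sub U.1 (U.1 * B), ← mul_assoc U.1 U.1 B, h, mul_sub, sub_mul, smul_mul_assoc,
    mul_smul_comm, ← mul_assoc, smul_sub]
  simp only [mul_one, one_mul]
  abel

end TraceIdentities

section CommutatorDivisibility

open Matrix

variable {R : Type*} [CommRing R]

lemma lie_mul_inv_self (U : SL(2, R)) (B : Matrix (Fin 2) (Fin 2) R) :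
    ⁅U.1, B⁆ * (U⁻¹ : SL(2, R)).1 = U.1 * ⁅U.1, B⁆ := by
  have h := lie_mul_self U B
  rw [coe_inv_eq_trace_smul_one_sub, sub_mul, smul_one_mul] at h
  rw [coe_inv_eq_trace_smul_one_sub, mul_sub, mul_smul_one, h, sub_sub_cancel]

/-- The left ideal of `M₂(R)` generated by the commutator of the images of the two generators. -/
def commutatorIdeal (f : F₂ →* SL(2, R)) : Ideal (Matrix (Fin 2) (Fin 2) R) :=
  Ideal.span {⁅(f a).1, (f b).1⁆}

variable {f : F₂ →* SL(2, R)}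

lemma lie_gen_mem_commutatorIdeal (i j : Fin 2) :
    ⁅(f (.of i)).1, (f (.of j)).1⁆ ∈ commutatorIdeal f := by
  have hab : ⁅(f a).1, (f b).1⁆ ∈ commutatorIdeal f := Ideal.mem_span_singleton_self _
  have hba : ⁅(f b).1, (f a).1⁆ ∈ commutatorIdeal f := by
    rwa [← neg_mem_iff, Ring.lie_def, neg_sub]
  have hself (x : Matrix (Fin 2) (Fin 2) R) : ⁅x, x⁆ ∈ commutatorIdeal f := by
    rw [Ring.lie_def, sub_self]
    exact zero_mem _
  fin_cases i <;> fin_cases j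
  exacts [hself _, hab, hba, hself _]

lemma mul_mem_commutatorIdeal {A : Matrix (Fin 2) (Fin 2) R} (hA : A ∈ commutatorIdeal f)
    (w : F₂) : A * (f w).1 ∈ commutatorIdeal f := by
  set C := ⁅(f a).1, (f b).1⁆ with hC
  have hC' : C = -⁅(f b).1, (f a).1⁆ := by rw [hC, Ring.lie_def, Ring.lie_def, neg_sub]
  have hgen : ∀ i, C * (f (.of i)).1 = (f (.of i))⁻¹.1 * C :=
    Fin.forall_fin_two.2 ⟨lie_mul_self _ _, by rw [hC', neg_mul, lie_mul_self, mul_neg]⟩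
  have hinv : ∀ i, C * (f (.of i))⁻¹.1 = (f (.of i)).1 * C :=
    Fin.forall_fin_two.2 ⟨lie_mul_inv_self _ _, by rw [hC', neg_mul, lie_mul_inv_self, mul_neg]⟩
  induction w using FreeGroup.induction_on generalizing A with
  | C1 => simpa using hA
  | of i =>
    obtain ⟨N, rfl⟩ := Ideal.mem_span_singleton'.1 hA
    exact Ideal.mem_span_singleton'.2 ⟨N * (f (.of i))⁻¹.1, by rw [mul_assoc, ← hgen, mul_assoc]⟩
  | inv_of i =>
    obtain ⟨N, rfl⟩ := Ideal.mem_span_singleton'.1 hA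
    exact Ideal.mem_span_singleton'.2
      ⟨N * (f (.of i)).1, by rw [map_inv, mul_assoc, ← hinv, mul_assoc]⟩
  | mul u v hu hv =>
    rw [map_mul, Matrix.SpecialLinearGroup.coe_mul, ← mul_assoc]
    exact hv (hu hA)

lemma lie_mem_commutatorIdeal_of_gen {B : Matrix (Fin 2) (Fin 2) R}
    (hB : ∀ i, ⁅(f (.of i)).1, B⁆ ∈ commutatorIdeal f) (w : F₂) :
    ⁅(f w).1, B⁆ ∈ commutatorIdeal f := by
  induction w using FreeGroup.induction_on with
  | C1 => simp [Ring.lie_def]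
  | of i => exact hB i
  | inv_of i =>
    have hinv : ⁅(f (.of i))⁻¹.1, B⁆ = -⁅(f (.of i)).1, B⁆ := by
      rw [coe_inv_eq_trace_smul_one_sub, Ring.lie_def, Ring.lie_def, sub_mul, mul_sub,
        smul_one_mul, mul_smul_one]
      abel
    rw [map_inv, hinv]
    exact neg_mem (hB i)
  | mul u v hu hv =>
    have hleibniz : ⁅(f (u * v)).1, B⁆ = (f u).1 * ⁅(f v).1, B⁆ + ⁅(f u).1, B⁆ * (f v).1 := by
      rw [map_mul, Matrix.SpecialLinearGroup.coe_mul]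
      simp only [Ring.lie_def]
      noncomm_ring
    rw [hleibniz]
    exact add_mem (Ideal.mul_mem_left _ _ hv) (mul_mem_commutatorIdeal hu v)

lemma lie_mem_commutatorIdeal (u v : F₂) : ⁅(f u).1, (f v).1⁆ ∈ commutatorIdeal f := by
  refine lie_mem_commutatorIdeal_of_gen (fun i ↦ ?_) u
  have hskew := lie_mem_commutatorIdeal_of_gen (f := f) (fun j ↦ lie_gen_mem_commutatorIdeal j i) v
  rwa [← neg_mem_iff, Ring.lie_def, neg_sub]

lemma det_lie_dvd (f : F₂ →* SL(2, R)) (u v : F₂) :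
    ⁅(f a).1, (f b).1⁆.det ∣ ⁅(f u).1, (f v).1⁆.det := by
  obtain ⟨N, hN⟩ := Ideal.mem_span_singleton'.1 (lie_mem_commutatorIdeal (f := f) u v)
  exact ⟨N.det, by rw [← hN, det_mul, mul_comm]⟩

end CommutatorDivisibility

section PingPong

universe u

open scoped Pointwise

/-- The nonzero vectors of a module on which a group acts additively. -/
def nonzeroVectors (G V : Type*) [Group G] [AddMonoid V] [DistribMulAction G V] :
    SubMulAction G V where
  carrier := {v | v ≠ 0}
  smul_mem' g _ hv := (smul_ne_zero_iff_ne g).2 hv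

lemma injective_lift_of_ping_pong_nonzero {ι G : Type u} {V : Type*} [Nontrivial ι] [Group G]
    [AddMonoid V] [DistribMulAction G V] (g : ι → G) (X Y : ι → Set V)
    (hX : ∀ i, ∃ v ∈ X i, v ≠ 0)
    (hXX : Pairwise fun i j ↦ ∀ v ≠ 0, v ∈ X i → v ∉ X j)
    (hYY : Pairwise fun i j ↦ ∀ v ≠ 0, v ∈ Y i → v ∉ Y j)
    (hXY : ∀ i j, ∀ v ≠ 0, v ∈ X i → v ∉ Y j)
    (hg : ∀ i, ∀ v ≠ 0, v ∉ Y i → g i • v ∈ X i) :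
    Function.Injective (FreeGroup.lift g) := by
  let N := nonzeroVectors G V
  have hdisj {S T : Set V} (h : ∀ v ≠ 0, v ∈ S → v ∉ T) :
      Disjoint (Subtype.val ⁻¹' S : Set N) (Subtype.val ⁻¹' T) :=
    Set.disjoint_left.2 fun v ↦ h v v.2
  refine FreeGroup.injective_lift_of_ping_pong g (fun i ↦ (Subtype.val ⁻¹' X i : Set N))
    (fun i ↦ Subtype.val ⁻¹' Y i) (fun i ↦ ?_) (fun i j hij ↦ hdisj (hXX hij))
    (fun i j hij ↦ hdisj (hYY hij)) (fun i j ↦ hdisj (hXY i j)) (fun i ↦ ?_) (fun i ↦ ?_)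
  · obtain ⟨v, hv, hv0⟩ := hX i
    exact ⟨⟨v, hv0⟩, hv⟩
  · rintro _ ⟨v, hv, rfl⟩
    exact hg i v v.2 hv
  · rintro _ ⟨v, hv, rfl⟩
    by_contra h
    refine hv ?_
    simpa using hg i _ (g⁻¹ i • v).2 h

lemma injective_lift_of_ping_pong_plane {R : Type} [CommRing R] (A B : SL(2, R))
    (XA XB YA YB : R → R → Prop) (hA : ∃ x y, (x ≠ 0 ∨ y ≠ 0) ∧ XA x y)
    (hB : ∃ x y, (x ≠ 0 ∨ y ≠ 0) ∧ XB x y)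
    (hdisj : [XA, XB, YA, YB].Pairwise fun P Q ↦ ∀ x y, (x ≠ 0 ∨ y ≠ 0) → P x y → ¬ Q x y)
    (hYA : ∀ x y, (x ≠ 0 ∨ y ≠ 0) → ¬ YA x y →
      XA (A 0 0 * x + A 0 1 * y) (A 1 0 * x + A 1 1 * y))
    (hYB : ∀ x y, (x ≠ 0 ∨ y ≠ 0) → ¬ YB x y →
      XB (B 0 0 * x + B 0 1 * y) (B 1 0 * x + B 1 1 * y)) :
    Function.Injective (FreeGroup.lift ![A, B]) := by
  have hne (v : Fin 2 → R) : v ≠ 0 ↔ v 0 ≠ 0 ∨ v 1 ≠ 0 := by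
    rw [← not_and_or, ne_eq, funext_iff, Fin.forall_fin_two]; rfl
  have hsmul (g : SL(2, R)) (v : Fin 2 → R) (i) : (g • v) i = g i 0 * v 0 + g i 1 * v 1 := by
    simp [Matrix.SpecialLinearGroup.smul_def, Matrix.mulVec, dotProduct]
  simp only [List.pairwise_cons, List.mem_cons, forall_eq_or_imp, List.not_mem_nil, false_imp_iff,
    implies_true, and_true, List.Pairwise.nil] at hdisj
  obtain ⟨⟨hXX, hAA, hAB⟩, ⟨hBA, hBB⟩, hYY⟩ := hdisj
  let region (P : R → R → Prop) : Set (Fin 2 → R) := {v | P (v 0) (v 1)}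
  have hmem {P Q : R → R → Prop} (h : ∀ x y, (x ≠ 0 ∨ y ≠ 0) → P x y → ¬ Q x y) :
      ∀ v ≠ 0, v ∈ region P → v ∉ region Q := fun v h0 ↦ h _ _ ((hne v).1 h0)
  have hpair {P Q : R → R → Prop} (h : ∀ x y, (x ≠ 0 ∨ y ≠ 0) → P x y → ¬ Q x y) :
      Pairwise fun i j ↦ ∀ v ≠ 0, v ∈ ![region P, region Q] i → v ∉ ![region P, region Q] j := by
    have h' := hmem h
    intro i j hij v h0
    fin_cases i <;> fin_cases j
    exacts [absurd rfl hij, h' v h0, imp_not_comm.1 (h' v h0), absurd rfl hij]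
  refine injective_lift_of_ping_pong_nonzero _ ![region XA, region XB] ![region YA, region YB]
    ?_ ?_ ?_ ?_ ?_
  · have hregion {P : R → R → Prop} (h : ∃ x y, (x ≠ 0 ∨ y ≠ 0) ∧ P x y) :
        ∃ v ∈ region P, v ≠ 0 := by
      obtain ⟨x, y, h0, h⟩ := h
      exact ⟨![x, y], h, (hne _).2 h0⟩
    exact Fin.forall_fin_two.2 ⟨hregion hA, hregion hB⟩
  · exact hpair hXX
  · exact hpair hYY
  · simp only [Fin.forall_fin_two]
    exact ⟨⟨hmem hAA, hmem hAB⟩, hmem hBA, hmem hBB⟩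
  · simp only [Fin.forall_fin_two]
    refine ⟨fun v h0 h ↦ ?_, fun v h0 h ↦ ?_⟩
    · change XA ((A • v) 0) ((A • v) 1)
      rw [hsmul, hsmul]
      exact hYA _ _ ((hne v).1 h0) h
    · change XB ((B • v) 0) ((B • v) 1)
      rw [hsmul, hsmul]
      exact hYB _ _ ((hne v).1 h0) h

end PingPong

section ModularRepresentation

/-- The representation `a ↦ [[2, 1], [1, 1]]`, `b ↦ [[2, -1], [-1, 1]]` of `F₂`, whose image is the
commutator subgroup of `SL(2,ℤ)`. -/
def modularRep : F₂ →* SL(2, ℤ) :=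
  FreeGroup.lift ![⟨!![2, 1; 1, 1], by simp⟩, ⟨!![2, -1; -1, 1], by simp⟩]

lemma coe_modularRep_a : (modularRep a).1 = !![2, 1; 1, 1] := by simp [modularRep]

lemma coe_modularRep_b : (modularRep b).1 = !![2, -1; -1, 1] := by simp [modularRep]

-- The ping-pong regions are the four sectors cut out by the coordinate axes and the diagonals.
lemma modularRep_injective : Function.Injective modularRep := by
  refine injective_lift_of_ping_pong_plane _ _
    (fun x y ↦ 0 ≤ x * y ∧ y ^ 2 < x ^ 2) (fun x y ↦ x * y < 0 ∧ y ^ 2 ≤ x ^ 2)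
    (fun x y ↦ x * y ≤ 0 ∧ x ^ 2 < y ^ 2) (fun x y ↦ 0 < x * y ∧ x ^ 2 ≤ y ^ 2)
    ⟨1, 0, by norm_num⟩ ⟨1, -1, by norm_num⟩ ?_ (fun x y h0 h ↦ ?_) (fun x y h0 h ↦ ?_)
  · simp only [List.pairwise_cons, List.mem_cons, List.not_mem_nil, or_false, and_imp,
      forall_eq_or_imp, not_and, not_le, not_lt, forall_eq, IsEmpty.forall_iff, implies_true,
      List.Pairwise.nil, and_true]
    refine ⟨⟨?_, ?_, ?_⟩, ⟨?_, ?_⟩, ?_⟩ <;> intros <;> linarith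
  all_goals
    have hp : 0 < x ^ 2 + y ^ 2 := by rcases h0 with h | h <;> positivity
    rw [not_and_or, not_lt, not_le] at h
    simp only [Matrix.of_apply, Matrix.cons_val', Matrix.cons_val_zero,
      Matrix.cons_val_fin_one, Matrix.cons_val_one]
    constructor <;> rcases h with h | h <;>
      nlinarith [sq_nonneg (x + y), sq_nonneg (x - y), sq_nonneg x]

end ModularRepresentation

section ModularTraces

open Matrix

/-- The reduction of `modularRep` modulo three, whose image is the quaternion group. -/
def modularRepModThree : F₂ →* SL(2, ZMod 3) :=
  (Matrix.SpecialLinearGroup.map (Int.castRingHom (ZMod 3))).comp modularRep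

lemma trace_modularRepModThree (w : F₂) :
    (modularRepModThree w).1.trace = ((modularRep w).1.trace : ZMod 3) := by
  simp [modularRepModThree, trace_fin_two]

/-- The quaternion group of order eight inside `SL(2,𝔽₃)`, as a list of matrices. -/
def quaternionMatrices : List (Matrix (Fin 2) (Fin 2) (ZMod 3)) :=
  [1, -1, !![2, 1; 1, 1], -!![2, 1; 1, 1], !![2, -1; -1, 1], -!![2, -1; -1, 1], !![0, -1; 1, 0],
    -!![0, -1; 1, 0]]

set_option maxRecDepth 2000 in
lemma modularRepModThree_mem_quaternionMatrices (w : F₂) :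
    (modularRepModThree w).1 ∈ quaternionMatrices := by
  have ha : (modularRepModThree a).1 = !![2, 1; 1, 1] := by
    ext i j
    fin_cases i <;> fin_cases j <;> simp [modularRepModThree, coe_modularRep_a]
  have hb : (modularRepModThree b).1 = !![2, -1; -1, 1] := by
    ext i j
    fin_cases i <;> fin_cases j <;> simp [modularRepModThree, coe_modularRep_b]
  have hadj : ∀ U ∈ quaternionMatrices, U.trace • 1 - U ∈ quaternionMatrices := by decide
  have hmul : ∀ U ∈ quaternionMatrices, ∀ V ∈ quaternionMatrices,
    U * V ∈ quaternionMatrices := by decide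
  have hgen : ∀ i, (modularRepModThree (.of i)).1 ∈ quaternionMatrices :=
    Fin.forall_fin_two.2 ⟨by rw [ha]; decide, by rw [hb]; decide⟩
  induction w using FreeGroup.induction_on with
  | C1 => simp [quaternionMatrices]
  | of i => exact hgen i
  | inv_of i =>
    rw [map_inv, coe_inv_eq_trace_smul_one_sub]
    exact hadj _ (hgen i)
  | mul u v hu hv =>
    rw [map_mul, Matrix.SpecialLinearGroup.coe_mul]
    exact hmul _ hu _ hv

lemma det_lie_modularRep : ⁅(modularRep a).1, (modularRep b).1⁆.det = 4 := by
  rw [coe_modularRep_a, coe_modularRep_b]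
  decide

lemma det_lie_modularRepModThree_ne_zero :
    ⁅(modularRepModThree a).1, (modularRepModThree b).1⁆.det ≠ 0 := by
  have h : ⁅(modularRepModThree a).1, (modularRepModThree b).1⁆ =
      (Int.castRingHom (ZMod 3)).mapMatrix ⁅(modularRep a).1, (modularRep b).1⁆ := by
    simp only [Ring.lie_def, map_sub, map_mul]
    rfl
  rw [h, ← RingHom.map_det, det_lie_modularRep]
  decide

lemma det_lie_aut_dvd {R : Type*} [CommRing R] (f : F₂ →* SL(2, R)) (α : MulAut F₂) :
    ⁅(f (α a)).1, (f (α b)).1⁆.det ∣ ⁅(f a).1, (f b).1⁆.det := by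
  simpa using det_lie_dvd (f.comp α.toMonoidHom) (α⁻¹ a) (α⁻¹ b)

-- A scalar matrix would make the commutator determinant vanish modulo three.
lemma three_dvd_trace_modularRep_aut_a (α : MulAut F₂) :
    3 ∣ (modularRep (α a)).1.trace := by
  have htrace : ∀ U ∈ quaternionMatrices, U.trace = 0 ∨ U = 1 ∨ U = -1 := by decide
  refine (ZMod.intCast_zmod_eq_zero_iff_dvd _ 3).1 (trace_modularRepModThree _ ▸ ?_)
  refine (htrace _ (modularRepModThree_mem_quaternionMatrices _)).resolve_right fun h ↦ ?_
  have hcomm : ⁅(modularRepModThree (α a)).1, (modularRepModThree (α b)).1⁆ = 0 := by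
    rcases h with h | h <;> simp [h, Ring.lie_def]
  have hdvd := det_lie_aut_dvd modularRepModThree α
  rw [hcomm, det_zero, zero_dvd_iff] at hdvd
  exact det_lie_modularRepModThree_ne_zero hdvd

lemma markov_of_three_dvd_of_dvd_four {x y z : ℤ} (hx : 3 ∣ x) (hy : 3 ∣ y) (hz : 3 ∣ z)
    (h : 4 + x * y * z - x ^ 2 - y ^ 2 - z ^ 2 ∣ 4) : x ^ 2 + y ^ 2 + z ^ 2 = x * y * z := by
  obtain ⟨x, rfl⟩ := hx
  obtain ⟨y, rfl⟩ := hy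
  obtain ⟨z, rfl⟩ := hz
  obtain ⟨n, hn⟩ : ∃ n, n = x ^ 2 + y ^ 2 + z ^ 2 - 3 * x * y * z := ⟨_, rfl⟩
  have hdvd : 4 - 9 * n ∣ 4 := by
    convert h using 1
    rw [hn]
    ring
  have hn0 : n = 0 := by
    have hle := Int.le_of_dvd (by norm_num) hdvd
    have hneg := Int.le_of_dvd (by norm_num) ((neg_dvd (α := ℤ)).2 hdvd)
    omega
  linear_combination 9 * (hn0 - hn)

lemma trace_modularRep_markov (α : MulAut F₂) :
    (modularRep (α a)).1.trace ^ 2 + (modularRep (α b)).1.trace ^ 2 +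
      (modularRep (α (a * b))).1.trace ^ 2 =
    (modularRep (α a)).1.trace * (modularRep (α b)).1.trace *
      (modularRep (α (a * b))).1.trace := by
  have hb := three_dvd_trace_modularRep_aut_a (α * swap)
  have hab := three_dvd_trace_modularRep_aut_a (α * hexRot)
  rw [MulAut.mul_apply, swap_a] at hb
  rw [MulAut.mul_apply, hexRot_a] at hab
  refine markov_of_three_dvd_of_dvd_four (three_dvd_trace_modularRep_aut_a α) hb hab ?_
  have hdvd := det_lie_aut_dvd modularRep α
  rw [det_lie_modularRep, det_lie] at hdvd
  simpa [mul_assoc] using hdvd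

lemma trace_modularRep_ne_zero (w : F₂) : (modularRep w).1.trace ≠ 0 := by
  intro h
  have hsq : (modularRep (w ^ 2)).1 = -1 := by
    rw [map_pow, sq, Matrix.SpecialLinearGroup.coe_mul, mul_self_eq, h, zero_smul, zero_sub]
  have hw : w ^ 4 = 1 := by
    refine modularRep_injective (Subtype.ext ?_)
    rw [pow_mul w 2 2, sq, map_mul, Matrix.SpecialLinearGroup.coe_mul, hsq]
    simp
  rw [(pow_eq_one_iff_left four_ne_zero).1 hw] at h
  simp at h

/-- The absolute value of the trace of `modularRep`, which does not change under conjugation and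
inversion of words. -/
def absTrace (w : F₂) : ℤ := |(modularRep w).1.trace|

lemma absTrace_pos (w : F₂) : 0 < absTrace w := abs_pos.2 (trace_modularRep_ne_zero w)

lemma absTrace_inv (w : F₂) : absTrace w⁻¹ = absTrace w := by
  rw [absTrace, map_inv, trace_inv, absTrace]

lemma absTrace_conj (g w : F₂) : absTrace (g * w * g⁻¹) = absTrace w := by
  rw [absTrace, map_mul, map_mul, map_inv, trace_conj, absTrace]

lemma trace_mul_trace_mul_trace_pos (α : MulAut F₂) :
    0 < (modularRep (α a)).1.trace * (modularRep (α b)).1.trace *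
      (modularRep (α (a * b))).1.trace := by
  rw [← trace_modularRep_markov]
  have := trace_modularRep_ne_zero (α a)
  positivity

lemma absTrace_markov (α : MulAut F₂) :
    absTrace (α a) ^ 2 + absTrace (α b) ^ 2 + absTrace (α (a * b)) ^ 2 =
      absTrace (α a) * absTrace (α b) * absTrace (α (a * b)) := by
  simp only [absTrace, ← abs_mul, sq_abs]
  rw [abs_of_pos (trace_mul_trace_mul_trace_pos α), trace_modularRep_markov]

lemma absTrace_aut_mul_inv (α : MulAut F₂) :
    absTrace (α (a * b⁻¹)) = absTrace (α a) * absTrace (α b) - absTrace (α (a * b)) := by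
  have htrace : (modularRep (α (a * b⁻¹))).1.trace =
      (modularRep (α a)).1.trace * (modularRep (α b)).1.trace -
        (modularRep (α (a * b))).1.trace := by
    simp only [map_mul, map_inv]
    exact trace_mul_inv _ _
  have hpos : 0 ≤ (modularRep (α (a * b))).1.trace * (modularRep (α (a * b⁻¹))).1.trace := by
    have hmarkov := trace_modularRep_markov α
    rw [htrace]
    nlinarith
  have hprod : absTrace (α (a * b)) * absTrace (α (a * b⁻¹)) =
      (modularRep (α (a * b))).1.trace * (modularRep (α (a * b⁻¹))).1.trace := by
    rw [absTrace, absTrace, ← abs_mul, abs_of_nonneg hpos]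
  have hsq : ∀ w, absTrace w ^ 2 = (modularRep w).1.trace ^ 2 := fun w ↦ sq_abs _
  refine mul_left_cancel₀ (absTrace_pos (α (a * b))).ne' ?_
  linear_combination hprod + absTrace_markov α + (modularRep (α (a * b))).1.trace * htrace -
    trace_modularRep_markov α - hsq (α a) - hsq (α b)

end ModularTraces

section ModularNormalizer

lemma mem_intertwiners_of_generators {H : Type*} [Group H] {ρ : F₂ →* H} {T : H} {α : MulAut F₂}
    (ha : T * ρ a = ρ (α a) * T) (hb : T * ρ b = ρ (α b) * T) : (T, α) ∈ intertwiners ρ :=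
  DFunLike.congr_fun (hom_ext (f := (MulAut.conj T).toMonoidHom.comp ρ)
    (g := ρ.comp α.toMonoidHom) (mul_inv_eq_of_eq_mul ha) (mul_inv_eq_of_eq_mul hb))

lemma coe_modularRep_ab : (modularRep (a * b)).1 = !![3, -1; 1, 0] := by
  rw [map_mul, Matrix.SpecialLinearGroup.coe_mul, coe_modularRep_a, coe_modularRep_b]
  decide

lemma modularGroup_T_mem_intertwiners : (ModularGroup.T, hexRot) ∈ intertwiners modularRep := by
  refine mem_intertwiners_of_generators (Subtype.ext ?_) (Subtype.ext ?_)
  · simp only [hexRot_a, Matrix.SpecialLinearGroup.coe_mul, coe_modularRep_a, coe_modularRep_ab,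
      ModularGroup.coe_T]
    decide
  · simp only [hexRot_b, map_inv, Matrix.SpecialLinearGroup.coe_mul, coe_modularRep_b,
      coe_inv_eq_trace_smul_one_sub, coe_modularRep_a, ModularGroup.coe_T]
    decide

lemma modularGroup_S_mem_intertwiners :
    (ModularGroup.S, MulAut.conj (a * b)⁻¹ * hexRot ^ 3) ∈ intertwiners modularRep := by
  have ha : (MulAut.conj (a * b)⁻¹ * hexRot ^ 3) a = a⁻¹ := by
    simp [pow_succ, MulAut.mul_apply, mul_assoc]
  have hb : (MulAut.conj (a * b)⁻¹ * hexRot ^ 3) b = b⁻¹ := by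
    simp [pow_succ, MulAut.mul_apply, mul_assoc]
  refine mem_intertwiners_of_generators (Subtype.ext ?_) (Subtype.ext ?_)
  · rw [ha, map_inv]
    simp only [Matrix.SpecialLinearGroup.coe_mul, coe_inv_eq_trace_smul_one_sub,
      coe_modularRep_a, ModularGroup.coe_S]
    decide
  · rw [hb, map_inv]
    simp only [Matrix.SpecialLinearGroup.coe_mul, coe_inv_eq_trace_smul_one_sub,
      coe_modularRep_b, ModularGroup.coe_S]
    decide

lemma exists_mem_hexGroup_mem_intertwiners (P : SL(2, ℤ)) :
    ∃ κ ∈ hexGroup, (P, κ) ∈ intertwiners modularRep := by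
  let N := (intertwiners modularRep ⊓ hexGroup.comap (MonoidHom.snd _ _)).map (MonoidHom.fst _ _)
  have hN : N = ⊤ := by
    rw [eq_top_iff, ← SpecialLinearGroup.SL2Z_generators, Subgroup.closure_le]
    rintro _ (rfl | rfl)
    · exact ⟨_, ⟨modularGroup_S_mem_intertwiners,
        mul_mem (conj_mem_hexGroup _) (pow_mem hexRot_mem_hexGroup 3)⟩, rfl⟩
    · exact ⟨_, ⟨modularGroup_T_mem_intertwiners, hexRot_mem_hexGroup⟩, rfl⟩
  obtain ⟨⟨_, κ⟩, ⟨hP, hκ⟩, rfl⟩ := (hN ▸ Subgroup.mem_top P : P ∈ N)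
  exact ⟨κ, hκ, hP⟩

end ModularNormalizer

section TraceThree

open Matrix

lemma isUnit_of_mul_eq {m n c d : ℤ} (hc : n * c = 1 + m - m ^ 2) (hd : n * d = 2 * m) :
    IsUnit n := by
  have hodd : IsCoprime n 2 := by
    obtain ⟨k, hk⟩ := Int.even_mul_pred_self m
    exact ⟨c, k, by linear_combination hc - hk⟩
  obtain ⟨k, rfl⟩ : n ∣ m := hodd.dvd_of_dvd_mul_left ⟨d, hd.symm⟩
  exact IsUnit.of_mul_eq_one (c - k + n * k ^ 2) (by linear_combination hc)

lemma exists_conj_modularRep_of_apply_zero_one_eq_one {U V : SL(2, ℤ)} (hU : U.1.trace = 3)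
    (hV : V.1.trace = 3) (h01 : U 0 1 = 1) (h01' : V 0 1 = -1) (h11 : U 1 1 + V 1 1 = 2) :
    ∃ P : SL(2, ℤ), P * modularRep a * P⁻¹ = U ∧ P * modularRep b * P⁻¹ = V := by
  have hdetU := U.det_coe
  have hdetV := V.det_coe
  rw [trace_fin_two] at hU hV
  rw [det_fin_two, h01] at hdetU
  rw [det_fin_two, h01'] at hdetV
  obtain ⟨m, hm⟩ : ∃ m, U 1 1 = 1 + m := ⟨U 1 1 - 1, by ring⟩
  have hUm : U.1 = !![2 - m, 1; 1 + m - m ^ 2, 1 + m] := by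
    rw [eta_fin_two U.1, h01, hm, show U 0 0 = 2 - m by linarith,
      show U 1 0 = 1 + m - m ^ 2 by linear_combination U 1 1 * hU - hdetU + (2 - m - U 1 1) * hm]
  have hVm : V.1 = !![2 + m, -1; -1 + m + m ^ 2, 1 - m] := by
    rw [eta_fin_two V.1, h01', show V 1 1 = 1 - m by linarith, show V 0 0 = 2 + m by linarith,
      show V 1 0 = -1 + m + m ^ 2 by
        linear_combination hdetV - V 1 1 * hV + (V 1 1 - m - 2) * (h11 - hm)]
  let P : SL(2, ℤ) := ⟨!![1, 0; m, 1], by simp⟩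
  refine ⟨P, mul_inv_eq_of_eq_mul ?_, mul_inv_eq_of_eq_mul ?_⟩ <;>
    refine Matrix.SpecialLinearGroup.ext _ _ fun i j ↦ ?_ <;>
    rw [Matrix.SpecialLinearGroup.coe_mul, Matrix.SpecialLinearGroup.coe_mul]
  · rw [coe_modularRep_a, hUm]
    fin_cases i <;> fin_cases j <;> simp [P, mul_apply] <;> ring
  · rw [coe_modularRep_b, hVm]
    fin_cases i <;> fin_cases j <;> simp [P, mul_apply] <;> ring

lemma exists_conj_modularRep_or_of_last_column {U V : SL(2, ℤ)} (hU : U.1.trace = 3)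
    (hV : V.1.trace = 3) (h01 : U 0 1 + V 0 1 = 0) (h11 : U 1 1 + V 1 1 = 2) :
    ∃ P : SL(2, ℤ), (P * modularRep a * P⁻¹ = U ∧ P * modularRep b * P⁻¹ = V) ∨
      (P * modularRep a * P⁻¹ = V ∧ P * modularRep b * P⁻¹ = U) := by
  have hunit : IsUnit (U 0 1) := by
    have hdetU := U.det_coe
    have hdetV := V.det_coe
    have hU' := hU
    have hV' := hV
    rw [det_fin_two] at hdetU hdetV
    rw [trace_fin_two] at hU' hV'
    refine isUnit_of_mul_eq (m := U 1 1 - 1) (c := U 1 0) (d := U 1 0 + V 1 0) ?_ ?_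
    · linear_combination hU' * U 1 1 - hdetU
    · linear_combination h01 * V 1 0 - hdetU + hdetV + U 1 1 * hU' - V 1 1 * hV' +
        (V 1 1 - U 1 1 - 1) * h11
  rcases Int.isUnit_iff.1 hunit with h | h
  · obtain ⟨P, hP⟩ :=
      exists_conj_modularRep_of_apply_zero_one_eq_one hU hV h (by linarith) h11
    exact ⟨P, .inl hP⟩
  · obtain ⟨P, hP⟩ :=
      exists_conj_modularRep_of_apply_zero_one_eq_one hV hU (by linarith) h (by linarith)
    exact ⟨P, .inr hP⟩

lemma exists_SL2_mul_last_column_eq_zero {M : Matrix (Fin 2) (Fin 2) ℤ} (hM : M.det = 0) :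
    ∃ P : SL(2, ℤ), ∀ i, (M * P.1) i 1 = 0 := by
  obtain ⟨v, hv0, hv⟩ := exists_mulVec_eq_zero_iff.2 hM
  have hgcd : 0 < Int.gcd (v 0) (v 1) := by
    rw [Int.gcd_pos_iff, ← not_and_or]
    exact fun h ↦ hv0 (funext (Fin.forall_fin_two.2 h))
  obtain ⟨x, y, hxy, hx, hy⟩ := Int.exists_gcd_one hgcd
  obtain ⟨P, hPx, hPy⟩ := (Int.isCoprime_iff_gcd_eq_one.2 hxy).exists_SL2_col 1
  refine ⟨P, fun i ↦ mul_right_cancel₀ (Nat.cast_ne_zero (R := ℤ).2 hgcd.ne') ?_⟩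
  have hi := congrFun hv i
  rw [mulVec, dotProduct, Fin.sum_univ_two, Pi.zero_apply] at hi
  rw [mul_apply, Fin.sum_univ_two, hPx, hPy]
  linear_combination hi - M i 0 * hx - M i 1 * hy

lemma det_add_sub_two (U V : SL(2, ℤ)) :
    (U.1 + V.1 - 2).det = (U.1.trace - 2) * (V.1.trace - 2) + 2 - (U * V).1.trace := by
  have hdetU := U.det_coe
  have hdetV := V.det_coe
  rw [det_fin_two] at hdetU hdetV ⊢
  simp only [Matrix.sub_apply, Matrix.add_apply, ofNat_apply, trace_fin_two, mul_apply,
    Matrix.SpecialLinearGroup.coe_mul, Fin.sum_univ_two, Fin.isValue, ↓reduceIte, zero_ne_one,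
    one_ne_zero, Nat.cast_ofNat, Nat.cast_zero, sub_zero]
  linear_combination hdetU + hdetV

-- A primitive vector killed by `U + V - 2` becomes the second basis vector.
lemma exists_conj_modularRep_or_of_trace_eq_three {U V : SL(2, ℤ)} (hU : U.1.trace = 3)
    (hV : V.1.trace = 3) (hUV : (U * V).1.trace = 3) :
    ∃ P : SL(2, ℤ), (P * modularRep a * P⁻¹ = U ∧ P * modularRep b * P⁻¹ = V) ∨
      (P * modularRep a * P⁻¹ = V ∧ P * modularRep b * P⁻¹ = U) := by
  obtain ⟨P, hP⟩ := exists_SL2_mul_last_column_eq_zero (M := U.1 + V.1 - 2)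
    (by rw [det_add_sub_two, hU, hV, hUV]; norm_num)
  have hconj : (P⁻¹ * U * P).1 + (P⁻¹ * V * P).1 = (P⁻¹).1 * ((U.1 + V.1 - 2) * P.1) + 2 := by
    have hinv : (P⁻¹).1 * P.1 = 1 := by
      rw [← Matrix.SpecialLinearGroup.coe_mul, inv_mul_cancel, Matrix.SpecialLinearGroup.coe_one]
    simp only [Matrix.SpecialLinearGroup.coe_mul]
    rw [sub_mul, mul_sub, add_mul, mul_add, (Commute.ofNat_left 2 P.1).eq, ← mul_assoc _ P.1,
      hinv, one_mul, sub_add_cancel, mul_assoc, mul_assoc]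
  have hsum (i : Fin 2) : (P⁻¹ * U * P) i 1 + (P⁻¹ * V * P) i 1 =
      (2 : Matrix (Fin 2) (Fin 2) ℤ) i 1 := by
    rw [← Matrix.add_apply, hconj, Matrix.add_apply, mul_apply, Fin.sum_univ_two, hP, hP]
    ring
  have htrace (W : SL(2, ℤ)) : (P⁻¹ * W * P).1.trace = W.1.trace := by
    simpa using trace_conj P⁻¹ W
  obtain ⟨Q, hQ⟩ := exists_conj_modularRep_or_of_last_column ((htrace U).trans hU)
    ((htrace V).trans hV) (hsum 0) (hsum 1)
  have hPQ {W W' : SL(2, ℤ)} (h : Q * W * Q⁻¹ = P⁻¹ * W' * P) :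
      P * Q * W * (P * Q)⁻¹ = W' := by
    rw [_root_.mul_inv_rev, ← mul_assoc, mul_assoc P Q W, mul_assoc P, h]
    group
  exact ⟨P * Q, hQ.imp (.imp hPQ hPQ) (.imp hPQ hPQ)⟩

end TraceThree

section MinimalTriple

lemma eq_of_modularRep_eq_or_eq_neg {u v : F₂}
    (h : modularRep u = modularRep v ∨ modularRep u = -modularRep v) : u = v := by
  refine pow_left_injective two_ne_zero (modularRep_injective ?_)
  rcases h with h | h <;> simp [h]

lemma trace_neg (U : SL(2, ℤ)) : (-U).1.trace = -U.1.trace := by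
  rw [Matrix.SpecialLinearGroup.coe_neg, Matrix.trace_neg]

lemma exists_eq_or_eq_neg_trace_eq_abs (U : SL(2, ℤ)) :
    ∃ U' : SL(2, ℤ), (U' = U ∨ U' = -U) ∧ U'.1.trace = |U.1.trace| := by
  rcases abs_choice U.1.trace with h | h
  · exact ⟨U, .inl rfl, h.symm⟩
  · exact ⟨-U, .inr rfl, by rw [trace_neg, h]⟩

lemma trace_mul_eq_three {U V U' V' : SL(2, ℤ)} (hU : U' = U ∨ U' = -U) (hV : V' = V ∨ V' = -V)
    (hU' : U'.1.trace = 3) (hV' : V'.1.trace = 3) (hUV : |(U * V).1.trace| = 3)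
    (hpos : 0 < U.1.trace * V.1.trace * (U * V).1.trace) : (U' * V').1.trace = 3 := by
  have habs : |(U' * V').1.trace| = 3 := by
    rcases hU with rfl | rfl <;> rcases hV with rfl | rfl <;> simpa [trace_neg] using hUV
  have hpos' : 0 < U'.1.trace * V'.1.trace * (U' * V').1.trace := by
    rcases hU with rfl | rfl <;> rcases hV with rfl | rfl <;> simpa [trace_neg] using hpos
  rw [hU', hV'] at hpos'
  rwa [abs_of_pos (by linarith)] at habs

lemma mem_hexGroup_or_of_absTrace_eq_three {α : MulAut F₂} (ha : absTrace (α a) = 3)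
    (hb : absTrace (α b) = 3) (hab : absTrace (α (a * b)) = 3) :
    α ∈ hexGroup ∨ α * swap ∈ hexGroup := by
  obtain ⟨U, hU, hU3⟩ := exists_eq_or_eq_neg_trace_eq_abs (modularRep (α a))
  obtain ⟨V, hV, hV3⟩ := exists_eq_or_eq_neg_trace_eq_abs (modularRep (α b))
  replace hU3 := hU3.trans ha
  replace hV3 := hV3.trans hb
  have hpos := trace_mul_trace_mul_trace_pos α
  rw [absTrace] at hab
  rw [map_mul, map_mul] at hab hpos
  obtain ⟨P, hP⟩ := exists_conj_modularRep_or_of_trace_eq_three hU3 hV3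
    (trace_mul_eq_three hU hV hU3 hV3 hab hpos)
  obtain ⟨κ, hκ, hPκ⟩ := exists_mem_hexGroup_mem_intertwiners P
  rw [hPκ a, hPκ b] at hP
  rcases hP with ⟨rfl, rfl⟩ | ⟨rfl, rfl⟩
  · have hακ : α = κ := aut_ext (eq_of_modularRep_eq_or_eq_neg hU).symm
      (eq_of_modularRep_eq_or_eq_neg hV).symm
    exact .inl (hακ ▸ hκ)
  · have hακ : α * swap = κ := aut_ext
      (by rw [MulAut.mul_apply, swap_a, eq_of_modularRep_eq_or_eq_neg hV])
      (by rw [MulAut.mul_apply, swap_b, eq_of_modularRep_eq_or_eq_neg hU])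
    exact .inr (hακ ▸ hκ)

end MinimalTriple

section Descent

lemma three_le_absTrace_aut_a (α : MulAut F₂) : 3 ≤ absTrace (α a) :=
  Int.le_of_dvd (absTrace_pos _) ((dvd_abs _ _).2 (three_dvd_trace_modularRep_aut_a α))

/-- A function on words that is invariant under conjugation and inversion, such as a trace or a
quadratic form in the exponents. -/
structure IsEvenClassFunction (f : F₂ → ℤ) : Prop where
  map_inv w : f w⁻¹ = f w
  map_conj g w : f (g * w * g⁻¹) = f w

lemma isEvenClassFunction_absTrace : IsEvenClassFunction absTrace :=
  ⟨absTrace_inv, absTrace_conj⟩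

lemma isEvenClassFunction_hexNorm : IsEvenClassFunction hexNorm :=
  ⟨hexNorm_inv, hexNorm_conj⟩

lemma mul_hexRot_a (α : MulAut F₂) : (α * hexRot) a = α (a * b) := by
  rw [MulAut.mul_apply, hexRot_a]

lemma mul_flip_a (α : MulAut F₂) : (α * flip) a = α a := by
  rw [MulAut.mul_apply, flip_a]

lemma mul_flip_ab (α : MulAut F₂) : (α * flip) (a * b) = α (a * b⁻¹) := by
  rw [MulAut.mul_apply, map_mul, flip_a, flip_b]

namespace IsEvenClassFunction

variable {f : F₂ → ℤ} (hf : IsEvenClassFunction f) (α : MulAut F₂)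
include hf

lemma hexRot_b : f ((α * hexRot) b) = f (α a) := by
  rw [MulAut.mul_apply, FreeTwo.hexRot_b, _root_.map_inv, hf.map_inv]

lemma hexRot_ab : f ((α * hexRot) (a * b)) = f (α b) := by
  rw [MulAut.mul_apply, map_mul, FreeTwo.hexRot_a, FreeTwo.hexRot_b, map_mul, map_mul,
    _root_.map_inv, hf.map_conj]

lemma flip_b : f ((α * flip) b) = f (α b) := by
  rw [MulAut.mul_apply, FreeTwo.flip_b, _root_.map_inv, hf.map_inv]

end IsEvenClassFunction

lemma three_le_absTrace_aut_ab (α : MulAut F₂) : 3 ≤ absTrace (α (a * b)) := by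
  simpa [MulAut.mul_apply] using three_le_absTrace_aut_a (α * hexRot)

lemma three_le_absTrace_aut_b (α : MulAut F₂) : 3 ≤ absTrace (α b) := by
  simpa [MulAut.mul_apply] using three_le_absTrace_aut_a (α * swap)

lemma markov_eq_three_of_le {x y z : ℤ} (hx : 3 ≤ x) (hxy : x ≤ y) (hyz : y ≤ z)
    (h : x ^ 2 + y ^ 2 + z ^ 2 = x * y * z) (hz : 2 * z ≤ x * y) : x = 3 ∧ y = 3 ∧ z = 3 := by
  have hprod : 0 ≤ (z - y) * (x * y - z - y) := mul_nonneg (by linarith) (by nlinarith)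
  have hx3 : x = 3 := by
    by_contra hne
    have hx4 : 4 ≤ x := by omega
    nlinarith [sq_nonneg y, mul_self_le_mul_self (by omega : 0 ≤ x) hxy]
  subst hx3
  have hy3 : y = 3 := by nlinarith
  subst hy3
  have hz4 : z ≤ 4 := by omega
  interval_cases z <;> simp_all

lemma markov_eq_three {x y z : ℤ} (hx : 3 ≤ x) (hy : 3 ≤ y) (hz : 3 ≤ z)
    (h : x ^ 2 + y ^ 2 + z ^ 2 = x * y * z) (hx' : 2 * x ≤ y * z) (hy' : 2 * y ≤ z * x)
    (hz' : 2 * z ≤ x * y) : x = 3 ∧ y = 3 ∧ z = 3 := by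
  wlog hxy : x ≤ y generalizing x y
  · have := this hy hx (by linarith) (by linarith) (by linarith) (by linarith) (by linarith)
    tauto
  rcases le_total y z with hyz | hzy
  · exact markov_eq_three_of_le hx hxy hyz h hz'
  rcases le_total x z with hxz | hzx
  · have := markov_eq_three_of_le hx hxz hzy (by linarith) (by linarith)
    tauto
  · have := markov_eq_three_of_le hz hzx hxy (by linarith) (by linarith)
    tauto

lemma mem_hexGroup_or_of_two_mul_absTrace_le {α : MulAut F₂}
    (ha : 2 * absTrace (α a) ≤ absTrace (α b) * absTrace (α (a * b)))
    (hb : 2 * absTrace (α b) ≤ absTrace (α (a * b)) * absTrace (α a))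
    (hab : 2 * absTrace (α (a * b)) ≤ absTrace (α a) * absTrace (α b)) :
    α ∈ hexGroup ∨ α * swap ∈ hexGroup := by
  obtain ⟨ha3, hb3, hab3⟩ := markov_eq_three (three_le_absTrace_aut_a α)
    (three_le_absTrace_aut_b α) (three_le_absTrace_aut_ab α) (absTrace_markov α) ha hb hab
  exact mem_hexGroup_or_of_absTrace_eq_three ha3 hb3 hab3

lemma hexNorm_apply_of_mem_hexGroup_or {α : MulAut F₂}
    (hα : α ∈ hexGroup ∨ α * swap ∈ hexGroup) (w : F₂) : hexNorm (α w) = hexNorm w := by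
  rcases hα with hα | hα
  · exact hexNorm_apply_of_mem_hexGroup hα w
  · have hw : (α * swap) (swap w) = α w := by
      rw [← MulAut.mul_apply, mul_assoc, swap_mul_swap, mul_one]
    rw [← hw, hexNorm_apply_of_mem_hexGroup hα, hexNorm_swap]

lemma hexNorm_mul_lt_of_two_mul_absTrace_le {α : MulAut F₂}
    (ha : absTrace (α b) * absTrace (α (a * b)) < 2 * absTrace (α a) →
      hexNorm (α b) + hexNorm (α (a * b)) < hexNorm (α a))
    (hb : absTrace (α (a * b)) * absTrace (α a) < 2 * absTrace (α b) →
      hexNorm (α (a * b)) + hexNorm (α a) < hexNorm (α b))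
    (hab : 2 * absTrace (α (a * b)) ≤ absTrace (α a) * absTrace (α b)) :
    hexNorm (α (a * b)) < hexNorm (α a) + hexNorm (α b) := by
  by_cases ha' : absTrace (α b) * absTrace (α (a * b)) < 2 * absTrace (α a)
  · linarith [ha ha', hexNorm_nonneg (α b)]
  by_cases hb' : absTrace (α (a * b)) * absTrace (α a) < 2 * absTrace (α b)
  · linarith [hb hb', hexNorm_nonneg (α a)]
  have hα := mem_hexGroup_or_of_two_mul_absTrace_le (not_lt.1 ha') (not_lt.1 hb') hab
  rw [hexNorm_apply_of_mem_hexGroup_or hα, hexNorm_apply_of_mem_hexGroup_or hα,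
    hexNorm_apply_of_mem_hexGroup_or hα, hexNorm_a, hexNorm_b, hexNorm_ab]
  norm_num

-- Inverting `b` replaces the trace `z` of `ab` by `xy - z < z`; the claim for the two rotations of
-- the smaller triple bounds `hexNorm (α (a * b⁻¹))`, and the parallelogram law concludes.
lemma hexNorm_add_lt_of_absTrace_mul_lt {α : MulAut F₂}
    (h : absTrace (α a) * absTrace (α b) < 2 * absTrace (α (a * b))) :
    hexNorm (α a) + hexNorm (α b) < hexNorm (α (a * b)) := by
  induction hn : (absTrace (α a) + absTrace (α b) + absTrace (α (a * b))).toNat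
    using Nat.strong_induction_on generalizing α with
  | _ n ih =>
  subst hn
  have hpos : 0 < absTrace (α a) + absTrace (α b) + absTrace (α (a * b)) := by
    linarith [absTrace_pos (α a), absTrace_pos (α b), absTrace_pos (α (a * b))]
  have hrec (γ : MulAut F₂) (hγ : absTrace (γ a) + absTrace (γ b) + absTrace (γ (a * b)) <
      absTrace (α a) + absTrace (α b) + absTrace (α (a * b))) :
      absTrace (γ a) * absTrace (γ b) < 2 * absTrace (γ (a * b)) →
        hexNorm (γ a) + hexNorm (γ b) < hexNorm (γ (a * b)) :=
    fun h ↦ ih _ ((Int.toNat_lt_toNat hpos).2 hγ) h rfl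
  have hT := isEvenClassFunction_absTrace
  have hN := isEvenClassFunction_hexNorm
  have hTab := absTrace_aut_mul_inv α
  have hflip : hexNorm (α (a * b⁻¹)) < hexNorm (α a) + hexNorm (α b) := by
    rw [← mul_flip_a α, ← hN.flip_b α, ← mul_flip_ab α]
    apply hexNorm_mul_lt_of_two_mul_absTrace_le
    · have := hrec (α * flip * hexRot * hexRot)
      simp only [mul_hexRot_a, mul_flip_a, mul_flip_ab, hT.hexRot_b, hT.hexRot_ab, hT.flip_b,
        hN.hexRot_b, hN.hexRot_ab, hN.flip_b] at this ⊢
      exact this (by linarith)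
    · have := hrec (α * flip * hexRot)
      simp only [mul_hexRot_a, mul_flip_a, mul_flip_ab, hT.hexRot_b, hT.hexRot_ab, hT.flip_b,
        hN.hexRot_b, hN.hexRot_ab, hN.flip_b] at this ⊢
      exact this (by linarith)
    · rw [mul_flip_a, mul_flip_ab, hT.flip_b]
      linarith
  rw [map_mul, map_inv, hexNorm_mul_inv, ← map_mul] at hflip
  linarith

lemma mem_hexGroup_or_of_hexNorm_eq_one {α : MulAut F₂} (ha : hexNorm (α a) = 1)
    (hb : hexNorm (α b) = 1) (hab : hexNorm (α (a * b)) = 1) :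
    α ∈ hexGroup ∨ α * swap ∈ hexGroup := by
  have hT := isEvenClassFunction_absTrace
  have hN := isEvenClassFunction_hexNorm
  have hab' := mt (hexNorm_add_lt_of_absTrace_mul_lt (α := α)) (by rw [ha, hb, hab]; norm_num)
  have hb' := mt (hexNorm_add_lt_of_absTrace_mul_lt (α := α * hexRot))
    (by simp only [mul_hexRot_a, hN.hexRot_b, hN.hexRot_ab]; rw [ha, hb, hab]; norm_num)
  have ha' := mt (hexNorm_add_lt_of_absTrace_mul_lt (α := α * hexRot * hexRot))
    (by simp only [mul_hexRot_a, hN.hexRot_b, hN.hexRot_ab]; rw [ha, hb, hab]; norm_num)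
  simp only [mul_hexRot_a, hT.hexRot_b, hT.hexRot_ab, not_lt] at ha' hb' hab'
  exact mem_hexGroup_or_of_two_mul_absTrace_le ha' hb' hab'

lemma mem_range_conj_of_abMatrix_eq_one {α : MulAut F₂} (h : abMatrix α = 1) :
    α ∈ MulAut.conj.range := by
  have hnorm (w : F₂) : hexNorm (α w) = hexNorm w := by
    rw [hexNorm, exponents_aut, h, Units.val_one, Matrix.one_mulVec, hexNorm]
  have hmem := mem_hexGroup_or_of_hexNorm_eq_one ((hnorm a).trans hexNorm_a)
    ((hnorm b).trans hexNorm_b) ((hnorm (a * b)).trans hexNorm_ab)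
  refine mem_range_conj_of_mem_hexGroup (hmem.resolve_right fun hswap ↦ ?_) h
  have hdet := det_abMatrix_of_mem_hexGroup hswap
  rw [map_mul, h, one_mul, coe_abMatrix_swap] at hdet
  revert hdet
  decide

end Descent

section FiniteOrder

open Matrix

lemma exists_posDef_conjTranspose_mul_mul_eq {n R : Type*} [Fintype n] [DecidableEq n] [CommRing R]
    [PartialOrder R] [StarRing R] [StarOrderedRing R] [NoZeroDivisors R] [Nontrivial R]
    {M : Matrix n n R} {k : ℕ} (hk : 0 < k) (hM : M ^ k = 1) :
    ∃ S : Matrix n n R, S.PosDef ∧ Mᴴ * S * M = S := by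
  obtain ⟨k, rfl⟩ := Nat.exists_eq_succ_of_ne_zero hk.ne'
  refine ⟨∑ i ∈ Finset.range (k + 1), (M ^ i)ᴴ * M ^ i, ?_, ?_⟩
  · rw [Finset.sum_range_succ', pow_zero, conjTranspose_one, one_mul]
    exact PosDef.one.posSemidef_add
      (posSemidef_sum _ fun i _ ↦ posSemidef_conjTranspose_mul_self _)
  · have hstep (i : ℕ) : Mᴴ * ((M ^ i)ᴴ * M ^ i) * M = (M ^ (i + 1))ᴴ * M ^ (i + 1) := by
      rw [pow_succ, conjTranspose_mul]
      simp only [mul_assoc]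
    rw [Finset.mul_sum, Finset.sum_mul, Finset.sum_congr rfl fun i _ ↦ hstep i,
      Finset.sum_range_succ, hM, Finset.sum_range_succ', pow_zero]

/-- A symmetric integral `2 × 2` matrix whose quadratic form is positive definite and reduced in
the sense of Gauss. -/
structure IsGaussReduced (S : Matrix (Fin 2) (Fin 2) ℤ) : Prop where
  symm : S 1 0 = S 0 1
  pos : 0 < S 0 0
  two_mul_abs_le : 2 * |S 0 1| ≤ S 0 0
  le : S 0 0 ≤ S 1 1

lemma transpose_mul_mul_mul (S : Matrix (Fin 2) (Fin 2) ℤ) (P E : SL(2, ℤ)) :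
    (P * E).1ᵀ * S * (P * E).1 = E.1ᵀ * (P.1ᵀ * S * P.1) * E.1 := by
  rw [Matrix.SpecialLinearGroup.coe_mul, transpose_mul]
  simp only [mul_assoc]

lemma exists_trace_transpose_mul_mul_le {S : Matrix (Fin 2) (Fin 2) ℤ} (hS : S.PosSemidef) :
    ∃ P : SL(2, ℤ), ∀ Q : SL(2, ℤ), (P.1ᵀ * S * P.1).trace ≤ (Q.1ᵀ * S * Q.1).trace := by
  have hnonneg (P : SL(2, ℤ)) : 0 ≤ (P.1ᵀ * S * P.1).trace :=
    (hS.conjTranspose_mul_mul_same P.1).trace_nonneg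
  let f (P : SL(2, ℤ)) : ℕ := (P.1ᵀ * S * P.1).trace.toNat
  refine ⟨Function.argmin f, fun Q ↦ ?_⟩
  have hle : f (Function.argmin f) ≤ f Q := Function.argmin_le f Q
  simpa only [f, Int.toNat_le, Int.toNat_of_nonneg (hnonneg Q)] using hle

-- A form of minimal trace in its `SL(2,ℤ)`-orbit is reduced, up to exchanging the basis vectors:
-- compare it with its images under the unit transvections.
lemma exists_isGaussReduced {S : Matrix (Fin 2) (Fin 2) ℤ} (hS : S.PosDef) :
    ∃ P : SL(2, ℤ), IsGaussReduced (P.1ᵀ * S * P.1) := by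
  obtain ⟨P, hmin, hle⟩ : ∃ P : SL(2, ℤ),
      (∀ Q : SL(2, ℤ), (P.1ᵀ * S * P.1).trace ≤ (Q.1ᵀ * S * Q.1).trace) ∧
      (P.1ᵀ * S * P.1) 0 0 ≤ (P.1ᵀ * S * P.1) 1 1 := by
    obtain ⟨P, hmin⟩ := exists_trace_transpose_mul_mul_le hS.posSemidef
    rcases le_total ((P.1ᵀ * S * P.1) 0 0) ((P.1ᵀ * S * P.1) 1 1) with hle | hle
    · exact ⟨P, hmin, hle⟩
    · refine ⟨P * ModularGroup.S, fun Q ↦ le_of_eq_of_le ?_ (hmin Q), ?_⟩ <;>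
        rw [transpose_mul_mul_mul, ModularGroup.coe_S]
      · simp [trace_fin_two, mul_apply, Fin.sum_univ_two, add_comm]
      · simpa [mul_apply, Fin.sum_univ_two] using hle
  have hpos : (P.1ᵀ * S * P.1).PosDef :=
    hS.conjTranspose_mul_mul_same (mulVec_injective_of_det_ne_zero (by simp))
  have hT := hmin (P * ModularGroup.T)
  have hT' := hmin (P * ModularGroup.T⁻¹)
  rw [transpose_mul_mul_mul] at hT hT'
  refine ⟨P, ?_⟩
  generalize P.1ᵀ * S * P.1 = R at *
  have hsymm : R 1 0 = R 0 1 := hpos.isHermitian.apply 0 1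
  simp only [Matrix.SpecialLinearGroup.coe_inv, ModularGroup.coe_T, adjugate_fin_two_of,
    trace_fin_two, mul_apply, Fin.sum_univ_two, transpose_apply, of_apply, cons_val', cons_val_zero,
    cons_val_one, cons_val_fin_one, hsymm] at hT hT'
  refine ⟨hsymm, hpos.diag_pos, ?_, hle⟩
  rw [← abs_two, ← abs_mul, abs_le]
  constructor <;> linarith

lemma three_mul_sq_le_form {p q r : ℤ} (hp : 0 ≤ p) (hq : 2 * |q| ≤ p) (hpr : p ≤ r) (x y : ℤ) :
    3 * (p * x ^ 2) ≤ 4 * (p * x ^ 2 + 2 * q * (x * y) + r * y ^ 2) ∧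
      3 * (r * y ^ 2) ≤ 4 * (p * x ^ 2 + 2 * q * (x * y) + r * y ^ 2) := by
  have hxy : -(p * (|x| * |y|)) ≤ 2 * q * (x * y) := by
    refine le_trans (neg_le_neg ?_) (neg_abs_le _)
    rw [abs_mul, abs_mul, abs_mul, abs_two]
    gcongr
  rw [← sq_abs x, ← sq_abs y]
  constructor <;> nlinarith [mul_nonneg hp (sq_nonneg (|x| - 2 * |y|)),
    mul_nonneg hp (sq_nonneg (2 * |x| - |y|)), mul_nonneg (sub_nonneg.2 hpr) (sq_nonneg |y|)]

lemma abs_le_one_of_three_mul_sq_le {p x : ℤ} (hp : 0 < p) (h : 3 * (p * x ^ 2) ≤ 4 * p) :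
    |x| ≤ 1 := by
  rw [← sq_le_one_iff_abs_le_one]
  by_contra! hx
  nlinarith

lemma abs_le_one_of_transpose_mul_mul_eq {S N : Matrix (Fin 2) (Fin 2) ℤ} (hS : IsGaussReduced S)
    (hN : Nᵀ * S * N = S) (i j : Fin 2) : |N i j| ≤ 1 := by
  obtain ⟨hsymm, hpos, hq, hle⟩ := hS
  simp only [← ext_iff, Fin.forall_fin_two, mul_apply, Fin.sum_univ_two, transpose_apply,
    hsymm] at hN
  obtain ⟨⟨h00, h01⟩, -, h11⟩ := hN
  have hpos' := hpos.trans_le hle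
  obtain ⟨hform00, hform10⟩ := three_mul_sq_le_form hpos.le hq hle (N 0 0) (N 1 0)
  obtain ⟨hform01, hform11⟩ := three_mul_sq_le_form hpos.le hq hle (N 0 1) (N 1 1)
  have hN00 : |N 0 0| ≤ 1 := abs_le_one_of_three_mul_sq_le hpos (by linarith)
  have hN10 : |N 1 0| ≤ 1 := abs_le_one_of_three_mul_sq_le hpos' (by linarith)
  have hN11 : |N 1 1| ≤ 1 := abs_le_one_of_three_mul_sq_le hpos' (by linarith)
  have hN01 : |N 0 1| ≤ 1 := by
    by_cases h10 : N 1 0 = 0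
    · have hz : S 0 0 * N 0 1 = S 0 1 * (N 0 0 - N 1 1) := by
        have hx : N 0 0 ^ 2 = 1 := by
          rw [h10] at h00
          exact mul_left_cancel₀ hpos.ne' (by linarith)
        rw [h10] at h01
        linear_combination N 0 0 * h01 - (S 0 0 * N 0 1 + S 0 1 * N 1 1) * hx
      refine le_of_mul_le_mul_left ?_ hpos
      calc S 0 0 * |N 0 1| = |S 0 1| * |N 0 0 - N 1 1| := by
            rw [← abs_mul, ← hz, abs_mul, abs_of_pos hpos]
        _ ≤ |S 0 1| * 2 := by
            gcongr
            linarith [abs_sub (N 0 0) (N 1 1)]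
        _ ≤ S 0 0 * 1 := by linarith
    · have hSS : S 1 1 ≤ S 0 0 := by
        have hq' := abs_le.1 (show |2 * S 0 1| ≤ S 0 0 by rwa [abs_mul, abs_two])
        rcases Int.abs_le_one_iff.1 hN00 with hx | hx | hx <;>
          rcases (Int.abs_le_one_iff.1 hN10).resolve_left h10 with hy | hy <;>
          rw [hx, hy] at h00 <;> linarith
      exact abs_le_one_of_three_mul_sq_le hpos (by linarith)
  fin_cases i <;> fin_cases j <;> assumption

lemma transpose_mul_self_or_of_isGaussReduced {S N : Matrix (Fin 2) (Fin 2) ℤ}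
    (hS : IsGaussReduced S) (hN : Nᵀ * S * N = S) :
    Nᵀ * N = 1 ∨ Nᵀ * !![2, -1; -1, 2] * N = !![2, -1; -1, 2] ∨
      Nᵀ * !![2, 1; 1, 2] * N = !![2, 1; 1, 2] := by
  have h00 := abs_le.1 (abs_le_one_of_transpose_mul_mul_eq hS hN 0 0)
  have h01 := abs_le.1 (abs_le_one_of_transpose_mul_mul_eq hS hN 0 1)
  have h10 := abs_le.1 (abs_le_one_of_transpose_mul_mul_eq hS hN 1 0)
  have h11 := abs_le.1 (abs_le_one_of_transpose_mul_mul_eq hS hN 1 1)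
  obtain ⟨hsymm, hpos, hq, hle⟩ := hS
  have hq' := abs_le.1 (show |2 * S 0 1| ≤ S 0 0 by rwa [abs_mul, abs_two])
  simp only [← ext_iff, Fin.forall_fin_two, mul_apply, Fin.sum_univ_two, transpose_apply, hsymm,
    of_apply, cons_val', cons_val_zero, cons_val_one, one_apply] at hN ⊢
  clear hsymm hq
  generalize N 0 0 = x, N 0 1 = y, N 1 0 = z, N 1 1 = w, S 0 0 = p, S 0 1 = q, S 1 1 = r at *
  obtain ⟨hx, hx'⟩ := h00
  obtain ⟨hy, hy'⟩ := h01
  obtain ⟨hz, hz'⟩ := h10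
  obtain ⟨hw, hw'⟩ := h11
  interval_cases x <;> interval_cases y <;> interval_cases z <;> interval_cases w <;>
    first | (exfalso; omega) | decide

end FiniteOrder

section SquareRepresentation

open Matrix

/-- The representation `a ↦ [[5/3, 4/3], [4/3, 5/3]]`, `b ↦ diag(3, 1/3)` of `F₂`: two hyperbolic
translations of equal length whose axes in the hyperbolic plane are perpendicular. -/
def squareRep : F₂ →* SL(2, ℚ) :=
  FreeGroup.lift ![⟨!![5 / 3, 4 / 3; 4 / 3, 5 / 3], by rw [det_fin_two_of]; norm_num⟩,
    ⟨!![3, 0; 0, 1 / 3], by rw [det_fin_two_of]; norm_num⟩]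

lemma coe_squareRep_a : (squareRep a).1 = !![5 / 3, 4 / 3; 4 / 3, 5 / 3] := by simp [squareRep]

lemma coe_squareRep_b : (squareRep b).1 = !![3, 0; 0, 1 / 3] := by simp [squareRep]

lemma coe_squareRep_b_inv : (squareRep b)⁻¹.1 = !![1 / 3, 0; 0, 3] := by
  rw [Matrix.SpecialLinearGroup.coe_inv, coe_squareRep_b, adjugate_fin_two_of, neg_zero]

-- The regions are neighbourhoods of the eigenlines, those of `a` being the diagonals and those of
-- `b` the coordinate axes.
lemma squareRep_injective : Function.Injective squareRep := by
  refine injective_lift_of_ping_pong_plane _ _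
    (fun x y ↦ 9 * (x - y) ^ 2 < (x + y) ^ 2) (fun x y ↦ 9 * y ^ 2 < x ^ 2)
    (fun x y ↦ 9 * (x + y) ^ 2 ≤ (x - y) ^ 2) (fun x y ↦ 9 * x ^ 2 ≤ y ^ 2)
    ⟨1, 1, by norm_num⟩ ⟨1, 0, by norm_num⟩ ?_ (fun x y _ h ↦ ?_) (fun x y _ h ↦ ?_)
  · simp only [List.pairwise_cons, List.mem_cons, List.not_mem_nil, or_false,
      forall_eq_or_imp, not_le, not_lt, forall_eq, IsEmpty.forall_iff, implies_true,
      List.Pairwise.nil, and_true]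
    refine ⟨⟨?_, ?_, ?_⟩, ⟨?_, ?_⟩, ?_⟩ <;> intro x y h0 h
    all_goals
      have hp : 0 < x ^ 2 + y ^ 2 := by rcases h0 with h | h <;> positivity
      nlinarith [sq_nonneg (x - 4 * y), sq_nonneg (x + 4 * y), sq_nonneg (4 * x - y),
        sq_nonneg (4 * x + y), sq_nonneg (x + y), sq_nonneg (x - y)]
  all_goals
    simp only [Matrix.of_apply, Matrix.cons_val', Matrix.cons_val_zero,
      Matrix.cons_val_fin_one, Matrix.cons_val_one]
    nlinarith

lemma swap_mem_intertwiners_squareRep :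
    (GeneralLinearGroup.mkOfDetNeZero !![1, 1; 1, -1] (by norm_num [det_fin_two_of]), swap) ∈
      intertwiners (SpecialLinearGroup.toGL.comp squareRep) := by
  refine mem_intertwiners_of_generators (Units.ext ?_) (Units.ext ?_)
  · rw [swap_a]
    change !![1, 1; 1, -1] * (squareRep a).1 = (squareRep b).1 * !![1, 1; 1, -1]
    rw [coe_squareRep_a, coe_squareRep_b]
    norm_num [mul_fin_two]
  · rw [swap_b]
    change !![1, 1; 1, -1] * (squareRep b).1 = (squareRep a).1 * !![1, 1; 1, -1]
    rw [coe_squareRep_a, coe_squareRep_b]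
    norm_num [mul_fin_two]

lemma flip_mem_intertwiners_squareRep :
    (GeneralLinearGroup.mkOfDetNeZero !![0, 1; 1, 0] (by norm_num [det_fin_two_of]), flip) ∈
      intertwiners (SpecialLinearGroup.toGL.comp squareRep) := by
  refine mem_intertwiners_of_generators (Units.ext ?_) (Units.ext ?_)
  · rw [flip_a]
    change !![0, 1; 1, 0] * (squareRep a).1 = (squareRep a).1 * !![0, 1; 1, 0]
    rw [coe_squareRep_a]
    norm_num [mul_fin_two]
  · rw [flip_b, map_inv]
    change !![0, 1; 1, 0] * (squareRep b).1 = (squareRep b)⁻¹.1 * !![0, 1; 1, 0]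
    rw [coe_squareRep_b_inv, coe_squareRep_b]
    norm_num [mul_fin_two]

end SquareRepresentation

section Realizable

open Matrix

/-- The automorphisms of `G` induced by conjugation in `H` through the representation `ρ`. -/
def inducedAut {G H : Type*} [Group G] [Group H] (ρ : G →* H) : Subgroup (MulAut G) :=
  (intertwiners ρ).map (MonoidHom.snd _ _)

lemma mem_inducedAut {G H : Type*} [Group G] [Group H] {ρ : G →* H} {α : MulAut G} :
    α ∈ inducedAut ρ ↔ ∃ T, (T, α) ∈ intertwiners ρ := by
  simp [inducedAut]

lemma conj_mem_inducedAut {G H : Type*} [Group G] [Group H] (ρ : G →* H) (g : G) :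
    MulAut.conj g ∈ inducedAut ρ :=
  mem_inducedAut.2 ⟨_, conj_mem_intertwiners ρ g⟩

/-- An automorphism of `F₂` is realizable if it is induced by conjugation in `GL(2,ℚ)` through a
faithful representation of `F₂` of determinant one. -/
def IsRealizable (α : MulAut F₂) : Prop :=
  ∃ ρ : F₂ →* GL (Fin 2) ℚ, Function.Injective ρ ∧ (∀ g, (ρ g).det = 1) ∧
    α ∈ inducedAut ρ

lemma IsRealizable.of_conj {α : MulAut F₂} (β : MulAut F₂) (h : IsRealizable (β⁻¹ * α * β)) :
    IsRealizable α := by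
  obtain ⟨ρ, hρ, hdet, hα⟩ := h
  obtain ⟨T, hT⟩ := mem_inducedAut.1 hα
  exact ⟨ρ.comp (β⁻¹ : MulAut F₂).toMonoidHom, hρ.comp (β⁻¹ : MulAut F₂).injective,
    fun g ↦ hdet _, mem_inducedAut.2 ⟨T, mem_intertwiners_comp_of_conj β hT⟩⟩

lemma GL_map_injective {n R S : Type*} [Fintype n] [DecidableEq n] [CommRing R] [CommRing S]
    {f : R →+* S} (hf : Function.Injective f) :
    Function.Injective (GeneralLinearGroup.map (n := n) f) :=
  Units.map_injective (Matrix.map_injective hf)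

lemma swap_mem_intertwiners_modularRep :
    ((⟨!![1, 0; 0, -1], !![1, 0; 0, -1], by decide, by decide⟩ : GL (Fin 2) ℤ), swap) ∈
      intertwiners (SpecialLinearGroup.toGL.comp modularRep) := by
  refine mem_intertwiners_of_generators (Units.ext ?_) (Units.ext ?_)
  · rw [swap_a]
    change !![1, 0; 0, -1] * (modularRep a).1 = (modularRep b).1 * !![1, 0; 0, -1]
    rw [coe_modularRep_a, coe_modularRep_b]
    decide
  · rw [swap_b]
    change !![1, 0; 0, -1] * (modularRep b).1 = (modularRep a).1 * !![1, 0; 0, -1]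
    rw [coe_modularRep_a, coe_modularRep_b]
    decide

lemma hexGroup_le_inducedAut : hexGroup ≤ inducedAut (SpecialLinearGroup.toGL.comp modularRep) := by
  rw [hexGroup, sup_le_iff, Subgroup.zpowers_le]
  refine ⟨?_, mem_inducedAut.2 ⟨_, map_mem_intertwiners _ modularGroup_T_mem_intertwiners⟩⟩
  rintro _ ⟨g, rfl⟩
  exact conj_mem_inducedAut _ g

lemma isRealizable_of_mem_hexGroup_or {α : MulAut F₂}
    (h : α ∈ hexGroup ∨ α * swap ∈ hexGroup) : IsRealizable α := by
  have hα : α ∈ inducedAut (SpecialLinearGroup.toGL.comp modularRep) := by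
    refine h.elim (@hexGroup_le_inducedAut α) fun h ↦ ?_
    exact (Subgroup.mul_mem_cancel_right _
      (mem_inducedAut.2 ⟨_, swap_mem_intertwiners_modularRep⟩)).1 (hexGroup_le_inducedAut h)
  obtain ⟨T, hT⟩ := mem_inducedAut.1 hα
  refine ⟨(GeneralLinearGroup.map (Int.castRingHom ℚ)).comp
    (SpecialLinearGroup.toGL.comp modularRep), ?_, fun g ↦ ?_,
    mem_inducedAut.2 ⟨_, map_mem_intertwiners _ hT⟩⟩
  · exact (GL_map_injective Int.cast_injective).comp
      (SpecialLinearGroup.toGL_injective.comp modularRep_injective)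
  · rw [MonoidHom.comp_apply, GeneralLinearGroup.map_det, MonoidHom.comp_apply,
      show GeneralLinearGroup.det (modularRep g).toGL = 1 from Units.ext (modularRep g).2, map_one]

lemma isRealizable_of_hexForm {α : MulAut F₂}
    (h : (abMatrix α).1ᵀ * !![2, -1; -1, 2] * (abMatrix α).1 = !![2, -1; -1, 2]) :
    IsRealizable α := by
  simp only [← ext_iff, Fin.forall_fin_two, mul_apply, Fin.sum_univ_two, transpose_apply, of_apply,
    cons_val', cons_val_zero, cons_val_one, abMatrix_apply] at h
  obtain ⟨⟨h00, h01⟩, -, h11⟩ := h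
  refine isRealizable_of_mem_hexGroup_or (mem_hexGroup_or_of_hexNorm_eq_one ?_ ?_ ?_)
  · rw [hexNorm]
    linarith
  · rw [hexNorm]
    linarith
  · simp only [hexNorm, map_mul, exponents_mul, Pi.add_apply]
    linarith

lemma exists_eq_pow_mul_pow_of_transpose_mul_self_eq_one {N : Matrix (Fin 2) (Fin 2) ℤ}
    (h : Nᵀ * N = 1) :
    ∃ i : Fin 4, ∃ j : Fin 2, N = !![0, -1; 1, 0] ^ i.1 * !![1, 0; 0, -1] ^ j.1 := by
  obtain ⟨x, y, z, w, rfl⟩ : ∃ x y z w, N = !![x, y; z, w] := ⟨_, _, _, _, eta_fin_two N⟩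
  have hxz : x * x + z * z = 1 := by simpa [mul_apply] using congrFun₂ h 0 0
  have hyw : y * y + w * w = 1 := by simpa [mul_apply] using congrFun₂ h 1 1
  obtain ⟨hx, hx'⟩ : -1 ≤ x ∧ x ≤ 1 := by constructor <;> nlinarith
  obtain ⟨hy, hy'⟩ : -1 ≤ y ∧ y ≤ 1 := by constructor <;> nlinarith
  obtain ⟨hz, hz'⟩ : -1 ≤ z ∧ z ≤ 1 := by constructor <;> nlinarith
  obtain ⟨hw, hw'⟩ : -1 ≤ w ∧ w ≤ 1 := by constructor <;> nlinarith
  clear hxz hyw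
  revert h
  interval_cases x <;> interval_cases y <;> interval_cases z <;> interval_cases w <;> decide

lemma isRealizable_of_transpose_mul_self_eq_one {α : MulAut F₂}
    (h : (abMatrix α).1ᵀ * (abMatrix α).1 = 1) : IsRealizable α := by
  obtain ⟨i, j, hij⟩ := exists_eq_pow_mul_pow_of_transpose_mul_self_eq_one h
  let σ := (swap * flip) ^ i.1 * flip ^ j.1
  have hσ : σ ∈ inducedAut (SpecialLinearGroup.toGL.comp squareRep) := by
    have hswap := mem_inducedAut.2 ⟨_, swap_mem_intertwiners_squareRep⟩
    have hflip := mem_inducedAut.2 ⟨_, flip_mem_intertwiners_squareRep⟩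
    exact mul_mem (pow_mem (mul_mem hswap hflip) _) (pow_mem hflip _)
  have hασ : abMatrix (α * σ⁻¹) = 1 := by
    rw [map_mul, map_inv, mul_inv_eq_one]
    refine Units.ext (hij.trans ?_)
    simp [σ, coe_abMatrix_swap, coe_abMatrix_flip]
  obtain ⟨g, hg⟩ := mem_range_conj_of_abMatrix_eq_one hασ
  refine ⟨SpecialLinearGroup.toGL.comp squareRep,
    SpecialLinearGroup.toGL_injective.comp squareRep_injective,
    fun g ↦ Units.ext (squareRep g).2, ?_⟩
  rw [← inv_mul_cancel_right α σ, ← hg]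
  exact mul_mem (conj_mem_inducedAut _ g) hσ

lemma transpose_mul_mul_abMatrix_conj {α : MulAut F₂} {S : Matrix (Fin 2) (Fin 2) ℤ}
    (h : (abMatrix α).1ᵀ * S * (abMatrix α).1 = S) (β : MulAut F₂) :
    (abMatrix (β⁻¹ * α * β)).1ᵀ * ((abMatrix β).1ᵀ * S * (abMatrix β).1) *
      (abMatrix (β⁻¹ * α * β)).1 = (abMatrix β).1ᵀ * S * (abMatrix β).1 := by
  have hcomm : (abMatrix β).1 * (abMatrix (β⁻¹ * α * β)).1 =
      (abMatrix α).1 * (abMatrix β).1 := by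
    rw [← Units.val_mul, ← Units.val_mul, ← map_mul, ← map_mul, mul_assoc, mul_inv_cancel_left]
  calc (abMatrix (β⁻¹ * α * β)).1ᵀ * ((abMatrix β).1ᵀ * S * (abMatrix β).1) *
        (abMatrix (β⁻¹ * α * β)).1
      = ((abMatrix β).1 * (abMatrix (β⁻¹ * α * β)).1)ᵀ * S *
          ((abMatrix β).1 * (abMatrix (β⁻¹ * α * β)).1) := by
        simp only [transpose_mul, Matrix.mul_assoc]
    _ = (abMatrix β).1ᵀ * ((abMatrix α).1ᵀ * S * (abMatrix α).1) * (abMatrix β).1 := by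
        rw [hcomm]
        simp only [transpose_mul, Matrix.mul_assoc]
    _ = (abMatrix β).1ᵀ * S * (abMatrix β).1 := by rw [h]

lemma exists_isGaussReduced_transpose_mul_mul_abMatrix_conj {α : MulAut F₂} {k : ℕ} (hk : 0 < k)
    (hα : abMatrix α ^ k = 1) : ∃ β : MulAut F₂, ∃ S, IsGaussReduced S ∧
      (abMatrix (β⁻¹ * α * β)).1ᵀ * S * (abMatrix (β⁻¹ * α * β)).1 = S := by
  obtain ⟨S, hS, hSα⟩ := exists_posDef_conjTranspose_mul_mul_eq hk (congrArg Units.val hα)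
  obtain ⟨P, hP⟩ := exists_isGaussReduced hS
  obtain ⟨β, hβ⟩ := exists_abMatrix_eq P
  refine ⟨β, _, ?_, transpose_mul_mul_abMatrix_conj hSα β⟩
  rwa [hβ]

lemma isRealizable_of_abMatrix_pow_eq_one {α : MulAut F₂} {k : ℕ} (hk : 0 < k)
    (hα : abMatrix α ^ k = 1) : IsRealizable α := by
  obtain ⟨β, S, hS, hβ⟩ := exists_isGaussReduced_transpose_mul_mul_abMatrix_conj hk hα
  refine .of_conj β ?_
  rcases transpose_mul_self_or_of_isGaussReduced hS hβ with h | h | h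
  · exact isRealizable_of_transpose_mul_self_eq_one h
  · exact isRealizable_of_hexForm h
  · have hflip : (abMatrix flip).1ᵀ * !![2, 1; 1, 2] * (abMatrix flip).1 = !![2, -1; -1, 2] := by
      rw [coe_abMatrix_flip]
      decide
    exact .of_conj flip (isRealizable_of_hexForm (hflip ▸ transpose_mul_mul_abMatrix_conj h flip))

end Realizable

end FreeTwo

theorem free2_semidirect_finite_order_embeds_in_GL2C_general {K : Type*} [Field K] [CharZero K]
    (α : MulAut (FreeGroup (Fin 2)))
    (hα : ∃ n : ℕ, 0 < n ∧ α ^ n ∈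
      (MulAut.conj : FreeGroup (Fin 2) →* MulAut (FreeGroup (Fin 2))).range) :
    ∃ ψ : (FreeGroup (Fin 2) ⋊[zpowersHom (MulAut (FreeGroup (Fin 2))) α]
        Multiplicative ℤ) →* GL (Fin 2) K,
      Function.Injective ψ := by
  obtain ⟨n, hn, g, hg⟩ := hα
  have habMatrix : FreeTwo.abMatrix α ^ n = 1 := by
    rw [← map_pow, ← hg, FreeTwo.abMatrix_conj]
  obtain ⟨ρ, hρ, hdet, hind⟩ := FreeTwo.isRealizable_of_abMatrix_pow_eq_one hn habMatrix
  obtain ⟨T, hT⟩ := FreeTwo.mem_inducedAut.1 hind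
  obtain ⟨ψ, hψ⟩ := FreeTwo.exists_injective_semidirect_hom_GL hρ hdet hT
  exact ⟨(Matrix.GeneralLinearGroup.map (algebraMap ℚ K)).comp ψ,
    (FreeTwo.GL_map_injective (algebraMap ℚ K).injective).comp hψ⟩

/-- If `α` is an automorphism of the free group `F₂` of rank
two whose image in `Out(F₂)` has finite order (some positive power of `α` is an
inner automorphism), then `F₂ ⋊_α ℤ` embeds in `GL(2,ℂ)`. -/
theorem free2_semidirect_finite_order_embeds_in_GL2C
    (α : MulAut (FreeGroup (Fin 2)))
    (hα : ∃ n : ℕ, 0 < n ∧ α ^ n ∈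
      (MulAut.conj : FreeGroup (Fin 2) →* MulAut (FreeGroup (Fin 2))).range) :
    ∃ ψ : (FreeGroup (Fin 2) ⋊[zpowersHom (MulAut (FreeGroup (Fin 2))) α]
        Multiplicative ℤ) →* GL (Fin 2) ℂ,
      Function.Injective ψ :=
  free2_semidirect_finite_order_embeds_in_GL2C_general α hα
end

section
/- Let F₂ be the free group on generators x, y and let α be the automorphism of F₂ determined by α(x) = x and α(y) = yx. Then for every p equal to zero or a prime, there exist a field F of characteristic p and an injective group homomorphism from the semidirect product F₂ ⋊_α ℤ into GL(6,F). -/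
open scoped MatrixGroups

/-!
Since `αⁿ(y) = y xⁿ` is never conjugate to `y` for `n ≠ 0`, no nontrivial power of `α` is inner, so
elements `x`, `y`, `t` of a group with `x`, `y` free, `t x = x t` and `t y = y x t` generate a copy
of `F₂ ⋊ ℤ`. Such elements exist among the automorphisms of the space of `2 × 2` matrices over a
field. Let `s` be transposition, `t` multiply row `i` by the scalar `uᵢ`, and `B` apply an
invertible matrix `Aᵢ` to row `i`. Then `t` commutes with `B`, and `x = s t s t⁻¹`, `y = B s`
satisfy the relations.

Freeness is proved by ping-pong on the matrices whose entries have valuations of the form `pᵢ qⱼ`,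
described by the ratios `p₁ / p₀` and `q₁ / q₀`. Powers of `x` multiply these ratios by opposite
powers of `v(u₁ / u₀)`. If all entries of each `Aᵢ` have the same valuation, then `y` sends a matrix
with ratios `(d, e)`, `d ≠ 1`, to one with ratios `(σ e, 1)`, where `σ` is the ratio of the
valuations of `A₁` and `A₀`. As `y⁻¹ = s (B⁻¹ s) s⁻¹`, the same description, transposed, applies to
the negative powers of `y` once the inverses of the `Aᵢ` have the same property with the same `σ`.
-/

section SemidirectProduct

variable {N G H : Type*} [Group N] [Group G] [Group H]

theorem semidirectProduct_lift_injective {φ : G →* MulAut N} {f : N →* H} {g : G →* H}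
    (hf : Function.Injective f)
    (h : ∀ x, f.comp (φ x).toMonoidHom = (MulAut.conj (g x)).toMonoidHom.comp f)
    (hφ : ∀ x, φ x ∈ (MulAut.conj : N →* MulAut N).range → x = 1) :
    Function.Injective (SemidirectProduct.lift f g h) := by
  rw [injective_iff_map_eq_one]
  rintro ⟨n, x⟩ hnx
  have hgx : g x = f n⁻¹ := by
    rw [SemidirectProduct.mk_eq_inl_mul_inr, map_mul, SemidirectProduct.lift_inl,
      SemidirectProduct.lift_inr] at hnx
    rw [map_inv, eq_inv_of_mul_eq_one_right hnx]
  have hinner : φ x = MulAut.conj n⁻¹ := by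
    ext m
    apply hf
    simpa [hgx] using DFunLike.congr_fun (h x) m
  obtain rfl : x = 1 := hφ x ⟨n⁻¹, hinner.symm⟩
  obtain rfl : n = 1 := hf (by simpa using hgx.symm)
  rfl

theorem map_zpow_mulAut_apply {f : N →* H} {α : MulAut N} {β : MulAut H}
    (h : ∀ w, f (α w) = β (f w)) (n : ℤ) (w : N) : f ((α ^ n) w) = (β ^ n) (f w) := by
  have hinv (w : N) : f (α⁻¹ w) = β⁻¹ (f w) := by
    rw [MulAut.inv_apply, MulAut.inv_apply, MulEquiv.eq_symm_apply, ← h, MulEquiv.apply_symm_apply]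
  induction n generalizing w with
  | zero => rfl
  | succ n ih => rw [zpow_add_one, zpow_add_one, MulAut.mul_apply, MulAut.mul_apply, ih, h]
  | pred n ih => rw [zpow_sub_one, zpow_sub_one, MulAut.mul_apply, MulAut.mul_apply, ih, hinv]

theorem mulAut_zpow_apply_transvection {α : MulAut N} {x y : N} (hx : α x = x)
    (hy : α y = y * x) (n : ℤ) : (α ^ n) y = y * x ^ n := by
  have hxn (n : ℤ) : (α ^ n) x = x :=
    zpow_mem (show α ∈ MulAction.stabilizer (MulAut N) x from hx) n
  induction n with
  | zero => simp
  | succ n ih => rw [zpow_add_one, MulAut.mul_apply, hy, map_mul, ih, hxn, zpow_add_one, mul_assoc]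
  | pred n ih =>
    have hy' : α⁻¹ y = y * x⁻¹ := by
      rw [MulAut.inv_apply, MulEquiv.symm_apply_eq, map_mul, map_inv, hx, hy, mul_inv_cancel_right]
    rw [zpow_sub_one, MulAut.mul_apply, hy', map_mul, ih, map_inv, hxn, zpow_sub_one, mul_assoc]

theorem eq_zero_of_parabolic_zpow_mem_range_conj {α : MulAut (FreeGroup (Fin 2))}
    (hx : α (FreeGroup.of 0) = FreeGroup.of 0)
    (hy : α (FreeGroup.of 1) = FreeGroup.of 1 * FreeGroup.of 0) {n : ℤ}
    (hn : α ^ n ∈ (MulAut.conj : FreeGroup (Fin 2) →* _).range) : n = 0 := by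
  obtain ⟨w, hw⟩ := hn
  let exponentSum : FreeGroup (Fin 2) →* Multiplicative ℤ :=
    FreeGroup.lift ![Multiplicative.ofAdd 1, 1]
  have h := congrArg exponentSum (DFunLike.congr_fun hw (FreeGroup.of 1))
  rw [mulAut_zpow_apply_transvection hx hy] at h
  exact ofAdd_eq_one.mp (by simpa [exponentSum, ← ofAdd_zsmul] using h.symm)

theorem exists_injective_parabolic_semidirectProduct {α : MulAut (FreeGroup (Fin 2))}
    (hx : α (FreeGroup.of 0) = FreeGroup.of 0)
    (hy : α (FreeGroup.of 1) = FreeGroup.of 1 * FreeGroup.of 0) {x y t : H}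
    (hfree : Function.Injective (FreeGroup.lift ![x, y]))
    (htx : t * x = x * t) (hty : t * y = y * x * t) :
    ∃ ψ : FreeGroup (Fin 2) ⋊[zpowersHom (MulAut (FreeGroup (Fin 2))) α] Multiplicative ℤ →* H,
      Function.Injective ψ := by
  have hconj : (FreeGroup.lift ![x, y]).comp α.toMonoidHom =
      (MulAut.conj t).toMonoidHom.comp (FreeGroup.lift ![x, y]) := by
    ext i
    fin_cases i <;> simp [hx, hy, htx, hty]
  refine ⟨SemidirectProduct.lift (FreeGroup.lift ![x, y]) (zpowersHom H t) fun n => ?_,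
    semidirectProduct_lift_injective hfree _ fun n hn => ?_⟩
  · refine MonoidHom.ext fun w => ?_
    simpa using map_zpow_mulAut_apply (DFunLike.congr_fun hconj) n.toAdd w
  · exact Multiplicative.toAdd.injective (eq_zero_of_parabolic_zpow_mem_range_conj hx hy hn)

end SemidirectProduct

section PingPong

open Cardinal Monoid

variable {ι G X : Type*} [Group G] [MulAction G X]

theorem freeGroup_lift_injective_of_zpow_ping_pong [Nontrivial ι] {a : ι → G} {S : ι → Set X}
    (hne : ∀ i, (S i).Nonempty) (hdisj : Pairwise fun i j => Disjoint (S i) (S j))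
    (hpp : Pairwise fun i j => ∀ n : ℤ, n ≠ 0 → Set.MapsTo (a i ^ n • ·) (S j) (S i)) :
    Function.Injective (FreeGroup.lift a) := by
  let f (i : ι) : FreeGroup Unit →* G := FreeGroup.lift fun _ => a i
  have hcard : ∃ _ : ι, 3 ≤ #(FreeGroup Unit) := by
    refine ⟨Classical.arbitrary ι, ?_⟩
    rw [FreeGroup.freeGroupUnitEquivInt.cardinal_eq, Cardinal.mk_denumerable]
    exact natCast_le_aleph0
  have hlift : FreeGroup.lift a = (CoprodI.lift f).comp freeGroupEquivCoprodI.toMonoidHom := by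
    ext i
    simp [f]
  rw [hlift, MonoidHom.coe_comp]
  refine Function.Injective.comp ?_ freeGroupEquivCoprodI.injective
  refine CoprodI.lift_injective_of_ping_pong f (.inr hcard) S hne hdisj fun i j hij w hw => ?_
  obtain ⟨n, rfl⟩ := FreeGroup.freeGroupUnitEquivInt.symm.surjective w
  have hn : n ≠ 0 := by
    rintro rfl
    exact hw rfl
  have hf : f i (FreeGroup.freeGroupUnitEquivInt.symm n) = a i ^ n := by
    simp [f, FreeGroup.freeGroupUnitEquivInt]
  rw [hf]
  exact (hpp hij n hn).image_subset

theorem mapsTo_pow_succ_smul {g : G} {R S : Set X} (hg : Set.MapsTo (g • ·) R S) (hSR : S ⊆ R) :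
    ∀ n : ℕ, Set.MapsTo (g ^ (n + 1) • ·) R S
  | 0 => by simpa using hg
  | n + 1 => fun w hw => by
    simpa only [pow_succ' g (n + 1), mul_smul] using
      hg (hSR (mapsTo_pow_succ_smul hg hSR n hw))

end PingPong

section LinearAlgebra

theorem exists_injective_linearEquiv_to_GL {K V : Type*} [Field K] [AddCommGroup V] [Module K V]
    [FiniteDimensional K V] {n : ℕ} (hn : Module.finrank K V ≤ n) :
    ∃ f : (V ≃ₗ[K] V) →* GL (Fin n) K, Function.Injective f := by
  let W := Fin (n - Module.finrank K V) → K
  have hrank : Module.finrank K (V × W) = n := by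
    rw [Module.finrank_prod, Module.finrank_fin_fun, Nat.add_sub_cancel' hn]
  let b := Module.finBasisOfFinrankEq K (V × W) hrank
  let extend : Module.End K V →* Module.End K (V × W) :=
    (LinearMap.prodMapRingHom K V W).toMonoidHom.comp (.inl (Module.End K V) (Module.End K W))
  have hextend : Function.Injective extend := fun f g h =>
    LinearMap.ext fun v => congrArg Prod.fst (LinearMap.congr_fun h (v, 0))
  let toMatrix := Units.mapEquiv (LinearMap.toMatrixAlgEquiv b).toMulEquiv
  let toUnits := (LinearMap.GeneralLinearGroup.generalLinearEquiv K V).symm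
  exact ⟨(toMatrix.toMonoidHom.comp (Units.map extend)).comp toUnits.toMonoidHom,
    (toMatrix.injective.comp (Units.map_injective hextend)).comp toUnits.injective⟩

end LinearAlgebra

section MatrixSpace

variable {n K : Type*} [CommRing K]

/-- Transposition, that is, the exchange of the two factors of `Kⁿ ⊗ Kⁿ`. -/
def matrixSwap : Matrix n n K ≃ₗ[K] Matrix n n K := Matrix.transposeLinearEquiv n n K K

/-- The diagonal operator multiplying the `(i, j)` entry by `c i j`. -/
def entryScale : (n → n → Kˣ) →* (Matrix n n K ≃ₗ[K] Matrix n n K) where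
  toFun c := LinearEquiv.piCongrRight fun i => LinearEquiv.piCongrRight fun j =>
    LinearEquiv.smulOfUnit (c i j)
  map_one' := LinearEquiv.ext fun w => one_smul (n → n → Kˣ) w
  map_mul' c d := LinearEquiv.ext fun w => mul_smul c d w

/-- The diagonal operator with weights `u j / u i`. It is the commutator of transposition with the
operator scaling row `i` by `u i`. -/
def ratioScale : (n → Kˣ) →* (Matrix n n K ≃ₗ[K] Matrix n n K) :=
  entryScale.comp
    { toFun u i j := u j / u i
      map_one' := by ext; simp
      map_mul' u u' := by ext i j; simp [mul_div_mul_comm] }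

theorem entryScale_apply (c : n → n → Kˣ) (w : Matrix n n K) (i j : n) :
    entryScale c w i j = c i j * w i j := rfl

theorem ratioScale_apply (u : n → Kˣ) (w : Matrix n n K) (i j : n) :
    ratioScale u w i j = (u j / u i : Kˣ) * w i j := rfl

theorem inv_matrixSwap : (matrixSwap : Matrix n n K ≃ₗ[K] Matrix n n K)⁻¹ = matrixSwap := rfl

theorem rowScale_mul_ratioScale (u : n → Kˣ) :
    entryScale (fun i _ => u i) * ratioScale u = ratioScale u * entryScale fun i _ => u i := by
  simp only [ratioScale, MonoidHom.comp_apply, ← map_mul, mul_comm]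

variable [Fintype n] [DecidableEq n]

/-- The operator applying `A i` to the `i`-th row, the rows being treated as column vectors. -/
def rowMulVec : (n → GL n K) →* (Matrix n n K ≃ₗ[K] Matrix n n K) where
  toFun A := LinearEquiv.piCongrRight fun i =>
    LinearMap.GeneralLinearGroup.generalLinearEquiv K (n → K)
      (Matrix.GeneralLinearGroup.toLin (A i))
  map_one' := by simp only [Pi.one_apply, map_one]; rfl
  map_mul' A B := by simp only [Pi.mul_apply, map_mul]; rfl

/-- Transposition followed by `A i` on the `i`-th row: the image of the generator `y` of `F₂`. -/
def rowSwap (A : n → GL n K) : Matrix n n K ≃ₗ[K] Matrix n n K := rowMulVec A * matrixSwap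

theorem rowSwap_apply (A : n → GL n K) (w : Matrix n n K) (i j : n) :
    rowSwap A w i j = ∑ l, (A i).val j l * w l i := rfl

theorem inv_rowSwap (A : n → GL n K) :
    (rowSwap A)⁻¹ = matrixSwap * rowSwap A⁻¹ * matrixSwap⁻¹ := by
  rw [rowSwap, rowSwap, map_inv, mul_inv_rev, inv_matrixSwap, ← mul_assoc]
  nth_rewrite 4 [← inv_matrixSwap]
  rw [mul_inv_cancel_right]

theorem rowScale_mul_rowSwap (u : n → Kˣ) (A : n → GL n K) :
    entryScale (fun i _ => u i) * rowSwap A =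
      rowSwap A * ratioScale u * entryScale fun i _ => u i := by
  ext w i j
  simp only [LinearEquiv.mul_apply, entryScale_apply, ratioScale_apply, rowSwap_apply,
    Finset.mul_sum]
  refine Finset.sum_congr rfl fun l _ => ?_
  rw [← mul_assoc (u i / u l : Kˣ).val, ← Units.val_mul, div_mul_cancel, mul_left_comm]

end MatrixSpace

section Monomials

variable {Γ₀ : Type*} [CommGroupWithZero Γ₀]

/-- The elements `α ^ k * σ ^ m` with `k : ℤ` and `m ≥ m₀`. -/
def monomials (α σ : Γ₀) (m₀ : ℕ) : Set Γ₀ := {γ | ∃ k : ℤ, ∃ m ≥ m₀, α ^ k * σ ^ m = γ}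

/-- The powers of `α` with nonzero integer exponent. -/
def nonzeroZPowers (α : Γ₀) : Set Γ₀ := {γ | ∃ k : ℤ, k ≠ 0 ∧ α ^ k = γ}

theorem zpow_mul_mem_monomials {α σ γ : Γ₀} {m₀ : ℕ} (hα : α ≠ 0) (k : ℤ)
    (hγ : γ ∈ monomials α σ m₀) : α ^ k * γ ∈ monomials α σ m₀ := by
  obtain ⟨l, m, hm, rfl⟩ := hγ
  exact ⟨k + l, m, hm, by rw [zpow_add₀ hα, mul_assoc]⟩

theorem mul_mem_monomials_succ {α σ γ : Γ₀} {m₀ : ℕ} (hγ : γ ∈ monomials α σ m₀) :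
    σ * γ ∈ monomials α σ (m₀ + 1) := by
  obtain ⟨k, m, hm, rfl⟩ := hγ
  exact ⟨k, m + 1, Nat.succ_le_succ hm, by rw [pow_succ', mul_left_comm]⟩

theorem monomials_antitone (α σ : Γ₀) : Antitone (monomials α σ) :=
  fun _ _ h _ ⟨k, m, hm, hγ⟩ => ⟨k, m, h.trans hm, hγ⟩

theorem nonzeroZPowers_subset_monomials (α σ : Γ₀) : nonzeroZPowers α ⊆ monomials α σ 0 :=
  fun _ ⟨k, _, hγ⟩ => ⟨k, 0, le_rfl, by rw [pow_zero, mul_one, hγ]⟩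

theorem one_mem_monomials_zero (α σ : Γ₀) : 1 ∈ monomials α σ 0 :=
  ⟨0, 0, le_rfl, by rw [zpow_zero, pow_zero, one_mul]⟩

/-- Multiplicative independence of `α` and `σ`. A nonnegative exponent of `σ` suffices, as one may
invert the relation. -/
def MulIndependent (α σ : Γ₀) : Prop := ∀ (k : ℤ) (m : ℕ), α ^ k * σ ^ m = 1 → k = 0 ∧ m = 0

theorem MulIndependent.one_notMem_monomials {α σ : Γ₀} (h : MulIndependent α σ) :
    1 ∉ monomials α σ 1 := by
  rintro ⟨k, m, hm, hkm⟩
  exact Nat.one_le_iff_ne_zero.mp hm (h k m hkm).2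

theorem MulIndependent.one_notMem_nonzeroZPowers {α σ : Γ₀} (h : MulIndependent α σ) :
    1 ∉ nonzeroZPowers α := by
  rintro ⟨k, hk, hα⟩
  exact hk (h k 0 (by rw [hα, pow_zero, one_mul])).1

end Monomials

section Valuation

variable {K Γ₀ : Type*} [Field K] [LinearOrderedCommGroupWithZero Γ₀] {v : Valuation K Γ₀}

/-- The valuations of the entries of `w` form a rank-one pattern: they are nonzero, the second row
is `d` times the first, and the second column is `e` times the first. -/
structure HasRatios (v : Valuation K Γ₀) (w : Matrix (Fin 2) (Fin 2) K) (d e : Γ₀) : Prop where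
  ne_zero : ∀ i j, v (w i j) ≠ 0
  row : ∀ j, v (w 1 j) = d * v (w 0 j)
  col : ∀ i, v (w i 1) = e * v (w i 0)

/-- The `2 × 2` matrices `w` with `HasRatios v w d e` for some `d ∈ D` and `e ∈ E`. -/
def ratioSet (v : Valuation K Γ₀) (D E : Set Γ₀) : Set (Matrix (Fin 2) (Fin 2) K) :=
  {w | ∃ d ∈ D, ∃ e ∈ E, HasRatios v w d e}

theorem ratioSet_mono {D D' E E' : Set Γ₀} (hD : D ⊆ D') (hE : E ⊆ E') :
    ratioSet v D E ⊆ ratioSet v D' E' :=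
  fun _ ⟨d, hd, e, he, h⟩ => ⟨d, hD hd, e, hE he, h⟩

theorem HasRatios.unique {w : Matrix (Fin 2) (Fin 2) K} {d e d' e' : Γ₀}
    (h : HasRatios v w d e) (h' : HasRatios v w d' e') : d = d' ∧ e = e' :=
  ⟨mul_right_cancel₀ (h.ne_zero 0 0) (h.row 0 ▸ h'.row 0),
    mul_right_cancel₀ (h.ne_zero 0 0) (h.col 0 ▸ h'.col 0)⟩

theorem HasRatios.map_matrixSwap {w : Matrix (Fin 2) (Fin 2) K} {d e : Γ₀}
    (h : HasRatios v w d e) : HasRatios v (matrixSwap w) e d :=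
  ⟨fun i j => h.ne_zero j i, h.col, h.row⟩

theorem HasRatios.map_ratioScale {w : Matrix (Fin 2) (Fin 2) K} {d e : Γ₀}
    (h : HasRatios v w d e) (a : Kˣ) :
    HasRatios v (ratioScale ![1, a] w) ((v a)⁻¹ * d) (v a * e) := by
  refine ⟨fun i j => ?_, fun j => ?_, fun i => ?_⟩
  · rw [ratioScale_apply, map_mul]
    exact mul_ne_zero (v.ne_zero_iff.mpr (Units.ne_zero _)) (h.ne_zero i j)
  · fin_cases j <;> simp [ratioScale_apply, h.row] <;> field_simp
  · fin_cases i <;> simp [ratioScale_apply, h.col] <;> field_simp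

/-- Every entry of `A i` has valuation `σ ^ i * γ`. For such an `A`, the valuations of the
entries of `A i *ᵥ u` are determined by those of `u 0` and `u 1` as soon as the latter differ. -/
def HasRowValuations (v : Valuation K Γ₀) (A : Fin 2 → GL (Fin 2) K) (σ γ : Γ₀) : Prop :=
  ∀ i j l, v ((A i).val j l) = σ ^ (i : ℕ) * γ

theorem HasRatios.map_rowSwap {w : Matrix (Fin 2) (Fin 2) K} {d e : Γ₀}
    (h : HasRatios v w d e) (hd : d ≠ 1) {A : Fin 2 → GL (Fin 2) K} {γ σ : Γ₀} (hγ : γ ≠ 0)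
    (hσ : σ ≠ 0) (hA : HasRowValuations v A σ γ) :
    HasRatios v (rowSwap A w) (σ * e) 1 := by
  have hentry (i j : Fin 2) :
      v (rowSwap A w i j) = σ ^ (i : ℕ) * γ * max (v (w 0 i)) (v (w 1 i)) := by
    have hne : v ((A i).val j 0 * w 0 i) ≠ v ((A i).val j 1 * w 1 i) := by
      rw [map_mul, map_mul, hA, hA, h.row]
      simp [hσ, hγ, h.ne_zero, hd]
    rw [rowSwap_apply, Fin.sum_univ_two, v.map_add_of_distinct_val hne,
      map_mul, map_mul, hA, hA, max_mul_mul_left]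
  refine ⟨fun i j => ?_, fun j => ?_, fun i => ?_⟩
  · rw [hentry]
    have hmax : 0 < max (v (w 0 i)) (v (w 1 i)) :=
      lt_max_of_lt_left (zero_lt_iff.mpr (h.ne_zero 0 i))
    exact mul_ne_zero (mul_ne_zero (pow_ne_zero _ hσ) hγ) hmax.ne'
  · rw [hentry, hentry, h.col, h.col, max_mul_mul_left]
    simp [mul_assoc, mul_left_comm]
  · rw [hentry, hentry, one_mul]

/-- The smallest transposition-invariant set containing `ratioSet v D E`; the two players of the
ping-pong argument are of this form. -/
def symmRatioSet (v : Valuation K Γ₀) (D E : Set Γ₀) : Set (Matrix (Fin 2) (Fin 2) K) :=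
  ratioSet v D E ∪ ratioSet v E D

theorem mapsTo_matrixSwap_symmRatioSet (D E : Set Γ₀) :
    Set.MapsTo (matrixSwap (n := Fin 2) (K := K)) (symmRatioSet v D E) (symmRatioSet v D E) := by
  rintro w (⟨d, hd, e, he, h⟩ | ⟨e, he, d, hd, h⟩)
  · exact .inr ⟨e, he, d, hd, h.map_matrixSwap⟩
  · exact .inl ⟨d, hd, e, he, h.map_matrixSwap⟩

theorem disjoint_symmRatioSet {D E E' : Set Γ₀} (hDE' : Disjoint D E')
    (hEE' : Disjoint E E') : Disjoint (symmRatioSet v D E) (symmRatioSet v D E') := by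
  rw [Set.disjoint_left] at hDE' hEE' ⊢
  rintro w (⟨d, hd, e, he, h⟩ | ⟨e, he, d, hd, h⟩) (⟨d', hd', e', he', h'⟩ | ⟨e', he', d', hd', h'⟩)
  all_goals obtain ⟨rfl, rfl⟩ := h.unique h'
  exacts [hEE' he he', hDE' hd he', hDE' hd he', hEE' he he']

theorem HasRatios.map_ratioScale_zpow {w : Matrix (Fin 2) (Fin 2) K} {d e : Γ₀}
    (h : HasRatios v w d e) (a : Kˣ) (k : ℤ) :
    HasRatios v ((ratioScale ![1, a] ^ k) w) (v a ^ (-k) * d) (v a ^ k * e) := by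
  have hpow : (![1, a] : Fin 2 → Kˣ) ^ k = ![1, a ^ k] := by
    ext i
    fin_cases i <;> simp
  rw [← map_zpow, hpow, zpow_neg, ← map_zpow₀, ← Units.val_zpow_eq_zpow_val]
  exact h.map_ratioScale (a ^ k)

theorem mapsTo_ratioScale_zpow {a : Kˣ} {σ : Γ₀} {k : ℤ} (hk : k ≠ 0) :
    Set.MapsTo ((ratioScale ![1, a] ^ k : Matrix (Fin 2) (Fin 2) K ≃ₗ[K] _) • ·)
      (symmRatioSet v (monomials (v a) σ 1) {1})
      (symmRatioSet v (monomials (v a) σ 1) (nonzeroZPowers (v a))) := by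
  have ha : v a ≠ 0 := v.ne_zero_iff.mpr a.ne_zero
  rintro w (⟨d, hd, _, rfl, h⟩ | ⟨_, rfl, e, he, h⟩)
  · exact .inl ⟨_, zpow_mul_mem_monomials ha (-k) hd, _, ⟨k, hk, (mul_one _).symm⟩,
      h.map_ratioScale_zpow a k⟩
  · exact .inr ⟨_, ⟨-k, neg_ne_zero.mpr hk, (mul_one _).symm⟩, _,
      zpow_mul_mem_monomials ha k he, h.map_ratioScale_zpow a k⟩

variable {A : Fin 2 → GL (Fin 2) K} {α σ γ : Γ₀}

theorem mapsTo_rowSwap (hγ : γ ≠ 0) (hσ : σ ≠ 0)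
    (hA : HasRowValuations v A σ γ) :
    Set.MapsTo (rowSwap A • ·) (ratioSet v (monomials α σ 0 \ {1}) (monomials α σ 0))
      (ratioSet v (monomials α σ 1) {1}) := by
  rintro w ⟨d, ⟨-, hd⟩, e, he, h⟩
  exact ⟨σ * e, mul_mem_monomials_succ he, 1, rfl, h.map_rowSwap hd hγ hσ hA⟩

theorem mapsTo_rowSwap_pow_succ (hασ : MulIndependent α σ) (hγ : γ ≠ 0) (hσ : σ ≠ 0)
    (hA : HasRowValuations v A σ γ) (n : ℕ) :
    Set.MapsTo (rowSwap A ^ (n + 1) • ·)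
      (symmRatioSet v (monomials α σ 1) (nonzeroZPowers α))
      (symmRatioSet v (monomials α σ 1) {1}) := by
  have hD : monomials α σ 1 ⊆ monomials α σ 0 \ {1} :=
    Set.subset_sdiff_singleton (monomials_antitone α σ zero_le_one) hασ.one_notMem_monomials
  have hN : nonzeroZPowers α ⊆ monomials α σ 0 \ {1} :=
    Set.subset_sdiff_singleton (nonzeroZPowers_subset_monomials α σ) hασ.one_notMem_nonzeroZPowers
  have hself : ratioSet v (monomials α σ 1) {1} ⊆
      ratioSet v (monomials α σ 0 \ {1}) (monomials α σ 0) :=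
    ratioSet_mono hD (Set.singleton_subset_iff.mpr (one_mem_monomials_zero α σ))
  have hsource : symmRatioSet v (monomials α σ 1) (nonzeroZPowers α) ⊆
      ratioSet v (monomials α σ 0 \ {1}) (monomials α σ 0) :=
    Set.union_subset (ratioSet_mono hD (hN.trans Set.sdiff_subset))
      (ratioSet_mono hN (hD.trans Set.sdiff_subset))
  exact (mapsTo_pow_succ_smul (mapsTo_rowSwap hγ hσ hA) hself n).mono hsource
    Set.subset_union_left

theorem mapsTo_rowSwap_zpow {γ' : Γ₀} (hασ : MulIndependent α σ) (hσ : σ ≠ 0)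
    (hγ : γ ≠ 0) (hA : HasRowValuations v A σ γ)
    (hγ' : γ' ≠ 0) (hA' : HasRowValuations v A⁻¹ σ γ') {k : ℤ} (hk : k ≠ 0) :
    Set.MapsTo (rowSwap A ^ k • ·)
      (symmRatioSet v (monomials α σ 1) (nonzeroZPowers α))
      (symmRatioSet v (monomials α σ 1) {1}) := by
  obtain ⟨n, rfl | rfl⟩ := k.eq_nat_or_neg
  all_goals obtain ⟨n, rfl⟩ := Nat.exists_eq_succ_of_ne_zero (n := n) (by simpa using hk)
  · simpa only [zpow_natCast] using mapsTo_rowSwap_pow_succ hασ hγ hσ hA n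
  · rw [zpow_neg, zpow_natCast, ← inv_pow, inv_rowSwap, conj_pow]
    exact (mapsTo_matrixSwap_symmRatioSet _ _).comp
      ((mapsTo_rowSwap_pow_succ hασ hγ' hσ hA' n).comp (mapsTo_matrixSwap_symmRatioSet _ _))

/-- An invertible matrix of determinant `c ^ 2 * b` which, for small `b`, has all entries of the
same valuation; so does its inverse. -/
def uniformGL (c b : Kˣ) : GL (Fin 2) K where
  val := (c : K) • !![1, 1; 1, 1 + (b : K)]
  inv := (c * b : K)⁻¹ • !![1 + (b : K), -1; -1, 1]
  val_inv := by ext i j; fin_cases i <;> fin_cases j <;> simp <;> field_simp <;> ring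
  inv_val := by ext i j; fin_cases i <;> fin_cases j <;> simp <;> field_simp <;> ring

theorem valuation_uniformGL (c : Kˣ) {b : Kˣ} (hb : v b < 1) (i j : Fin 2) :
    v ((uniformGL c b).val i j) = v c := by
  fin_cases i <;> fin_cases j <;> simp [uniformGL, v.map_one_add_of_lt hb]

theorem valuation_inv_uniformGL (c : Kˣ) {b : Kˣ} (hb : v b < 1) (i j : Fin 2) :
    v ((uniformGL c b)⁻¹.val i j) = (v c * v b)⁻¹ := by
  change v ((uniformGL c b).inv i j) = _
  fin_cases i <;> fin_cases j <;> simp [uniformGL, v.map_one_add_of_lt hb]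

theorem exists_hasRowValuations {s : Kˣ} (hs : v s < 1) :
    ∃ A : Fin 2 → GL (Fin 2) K,
      HasRowValuations v A (v s) 1 ∧ HasRowValuations v A⁻¹ (v s) (v s ^ 3)⁻¹ := by
  have hs₀ : v s ≠ 0 := v.ne_zero_iff.mpr s.ne_zero
  have hs3 : v ((s ^ 3 : Kˣ) : K) < 1 := by
    simpa using pow_lt_one₀ zero_le hs three_ne_zero
  -- The factors `c` have ratio `s` and the products `c * b` have ratio `s⁻¹`, so that `σ = v s` for
  -- both `A` and `A⁻¹`.
  refine ⟨![uniformGL 1 (s ^ 3), uniformGL s s], fun i j l => ?_, fun i j l => ?_⟩ <;> fin_cases i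
  · exact (valuation_uniformGL 1 hs3 j l).trans (by simp)
  · exact (valuation_uniformGL s hs j l).trans (by simp)
  · exact (valuation_inv_uniformGL 1 hs3 j l).trans (by simp)
  · exact (valuation_inv_uniformGL s hs j l).trans (by simp; field_simp)

theorem freeGroup_lift_ratioScale_rowSwap_injective {a s : Kˣ} {γ γ' : Γ₀}
    (has : MulIndependent (v a) (v s)) (hγ : γ ≠ 0) (hA : HasRowValuations v A (v s) γ)
    (hγ' : γ' ≠ 0) (hA' : HasRowValuations v A⁻¹ (v s) γ') :
    Function.Injective (FreeGroup.lift ![ratioScale ![1, a], rowSwap A]) := by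
  let S : Fin 2 → Set (Matrix (Fin 2) (Fin 2) K) :=
    ![symmRatioSet v (monomials (v a) (v s) 1) (nonzeroZPowers (v a)),
      symmRatioSet v (monomials (v a) (v s) 1) {1}]
  have hx (k : ℤ) (hk : k ≠ 0) : Set.MapsTo (ratioScale ![1, a] ^ k • ·) (S 1) (S 0) :=
    mapsTo_ratioScale_zpow hk
  have hy (k : ℤ) (hk : k ≠ 0) : Set.MapsTo (rowSwap A ^ k • ·) (S 0) (S 1) :=
    mapsTo_rowSwap_zpow has (v.ne_zero_iff.mpr s.ne_zero) hγ hA hγ' hA' hk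
  have hS₁ : (S 1).Nonempty := by
    refine ⟨!![1, 1; s, s], .inl ⟨v s, ⟨0, 1, le_rfl, by simp⟩, 1, rfl, ?_, ?_, ?_⟩⟩ <;>
      simp [Fin.forall_fin_two]
  have hS₀ : (S 0).Nonempty := hS₁.elim fun w hw => ⟨_, hx 1 one_ne_zero hw⟩
  have hdisj : Disjoint (S 0) (S 1) := disjoint_symmRatioSet
    (Set.disjoint_singleton_right.mpr has.one_notMem_monomials)
    (Set.disjoint_singleton_right.mpr has.one_notMem_nonzeroZPowers)
  refine freeGroup_lift_injective_of_zpow_ping_pong (S := S)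
    (Fin.forall_fin_two.mpr ⟨hS₀, hS₁⟩) ?_ ?_
  · simp [Pairwise, Fin.forall_fin_two, hdisj, hdisj.symm]
  · simpa [Pairwise, Fin.forall_fin_two] using ⟨hx, hy⟩

end Valuation

section HahnSeries

open Multiplicative

variable (Γ k : Type*) [AddCommGroup Γ] [LinearOrder Γ] [IsOrderedAddMonoid Γ] [Field k]

/-- The monomials with coefficient `1` as units of the ring of Hahn series. -/
noncomputable def singleUnit : Multiplicative Γ →* (HahnSeries Γ k)ˣ :=
  MonoidHom.toHomUnits
    { toFun g := HahnSeries.single g.toAdd 1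
      map_one' := rfl
      map_mul' g h := by simp }

/-- The valuation by lowest exponent, in multiplicative notation: larger exponents have smaller
value. -/
noncomputable def hahnValuation : Valuation (HahnSeries Γ k) (Multiplicative (WithTop Γ)ᵒᵈ) :=
  (HahnSeries.addVal Γ k).toValuation

theorem hahnValuation_singleUnit (g : Multiplicative Γ) :
    hahnValuation Γ k (singleUnit Γ k g) = ofAdd (OrderDual.toDual (g.toAdd : WithTop Γ)) := by
  simp [hahnValuation, singleUnit]

theorem hahnValuation_singleUnit_lt_one {g : Multiplicative Γ} (hg : 1 < g) :
    hahnValuation Γ k (singleUnit Γ k g) < 1 := by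
  rw [hahnValuation_singleUnit]
  exact WithTop.coe_pos.mpr hg

theorem mulIndependent_hahnValuation_singleUnit {g h : Multiplicative Γ}
    (hgh : ∀ (n : ℤ) (m : ℕ), g ^ n * h ^ m = 1 → n = 0 ∧ m = 0) :
    MulIndependent (hahnValuation Γ k (singleUnit Γ k g))
      (hahnValuation Γ k (singleUnit Γ k h)) := by
  intro n m hnm
  have hmonomial : hahnValuation Γ k (singleUnit Γ k (g ^ n * h ^ m)) = 1 := by
    simpa using hnm
  rw [hahnValuation_singleUnit] at hmonomial
  exact hgh n m (toAdd_eq_zero.mp (WithTop.coe_eq_zero.mp hmonomial))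

theorem exists_mulIndependent_hahnValuation : ∃ a s : (HahnSeries (ℤ ×ₗ ℤ) k)ˣ,
    hahnValuation (ℤ ×ₗ ℤ) k s < 1 ∧
      MulIndependent (hahnValuation (ℤ ×ₗ ℤ) k a) (hahnValuation (ℤ ×ₗ ℤ) k s) := by
  refine ⟨singleUnit _ k (ofAdd (toLex (1, 0))), singleUnit _ k (ofAdd (toLex (0, 1))),
    hahnValuation_singleUnit_lt_one _ k (by decide),
    mulIndependent_hahnValuation_singleUnit _ k fun n m h => ?_⟩
  have hlex : ofLex (n • toLex ((1 : ℤ), (0 : ℤ)) + m • toLex ((0 : ℤ), (1 : ℤ))) = 0 := h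
  simpa [Prod.ext_iff] using hlex

theorem exists_field_charP {p : ℕ} (hp : p = 0 ∨ p.Prime) :
    ∃ (k : Type) (_ : Field k), CharP k p := by
  obtain rfl | hp := hp
  · exact ⟨ℚ, inferInstance, inferInstance⟩
  · have := Fact.mk hp
    exact ⟨ZMod p, inferInstance, inferInstance⟩

end HahnSeries

theorem free2_parabolic_semidirect_embeds_in_GL6_general
    (α : MulAut (FreeGroup (Fin 2)))
    (hx : α (FreeGroup.of 0) = FreeGroup.of 0)
    (hy : α (FreeGroup.of 1) = FreeGroup.of 1 * FreeGroup.of 0)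
    (p : ℕ) (hp : p = 0 ∨ p.Prime) {n : ℕ} (hn : 4 ≤ n) :
    ∃ (F : Type) (_ : Field F), CharP F p ∧
      ∃ ψ : (FreeGroup (Fin 2) ⋊[zpowersHom (MulAut (FreeGroup (Fin 2))) α]
          Multiplicative ℤ) →* GL (Fin n) F,
        Function.Injective ψ := by
  obtain ⟨k, _, _⟩ := exists_field_charP hp
  let K := HahnSeries (ℤ ×ₗ ℤ) k
  have hK : CharP K p := charP_of_injective_ringHom (HahnSeries.C_injective (Γ := ℤ ×ₗ ℤ)) p
  obtain ⟨a, s, hs, has⟩ := exists_mulIndependent_hahnValuation k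
  obtain ⟨A, hA, hA'⟩ := exists_hasRowValuations hs
  have hγ : (hahnValuation (ℤ ×ₗ ℤ) k s ^ 3)⁻¹ ≠ 0 := by simp
  obtain ⟨ψ, hψ⟩ := exists_injective_parabolic_semidirectProduct hx hy
    (freeGroup_lift_ratioScale_rowSwap_injective has one_ne_zero hA hγ hA')
    (rowScale_mul_ratioScale ![1, a]) (rowScale_mul_rowSwap ![1, a] A)
  obtain ⟨f, hf⟩ := exists_injective_linearEquiv_to_GL (K := K)
    (V := Matrix (Fin 2) (Fin 2) K) (n := n) (by simpa [Module.finrank_matrix] using hn)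
  exact ⟨K, inferInstance, hK, f.comp ψ, hf.comp hψ⟩

/-- Let `α` be the automorphism of the free group `F₂` on
`x, y` (here `x = FreeGroup.of 0`, `y = FreeGroup.of 1`) with `α(x) = x` and
`α(y) = yx`. Then for every `p` equal to zero or a prime, `F₂ ⋊_α ℤ` embeds in
`GL(6,F)` for some field `F` of characteristic `p`. -/
theorem free2_parabolic_semidirect_embeds_in_GL6
    (α : MulAut (FreeGroup (Fin 2)))
    (hx : α (FreeGroup.of 0) = FreeGroup.of 0)
    (hy : α (FreeGroup.of 1) = FreeGroup.of 1 * FreeGroup.of 0)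
    (p : ℕ) (hp : p = 0 ∨ p.Prime) :
    ∃ (F : Type) (_ : Field F), CharP F p ∧
      ∃ ψ : (FreeGroup (Fin 2) ⋊[zpowersHom (MulAut (FreeGroup (Fin 2))) α]
          Multiplicative ℤ) →* GL (Fin 6) F,
        Function.Injective ψ :=
  free2_parabolic_semidirect_embeds_in_GL6_general α hx hy p hp (by norm_num)
end

section
/- Let F be a field, d ≥ 1, and let T, A ∈ GL(d,F) be commuting matrices such that T is conjugate in GL(d,F) to TA and also conjugate in GL(d,F) to TA². Then every eigenvalue of A in an algebraic closure of F is a root of unity; equivalently, there exists an integer e ≥ 1 such that every root of the characteristic polynomial of A in the algebraic closure of F satisfies μᵉ = 1. -/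
open scoped MatrixGroups

/-!
Over an algebraic closure the commuting matrices `T` and `A` can be triangularized simultaneously,
so their eigenvalues come in pairs `(tᵢ, aᵢ)` for which `T * A ^ k` has the eigenvalues
`tᵢ * aᵢ ^ k` with multiplicity. Let `φ` be a homomorphism from the multiplicative group to `ℚ`
and put `xᵢ = φ tᵢ`, `yᵢ = φ aᵢ`. The conjugacies say that the families `x`, `x + y` and `x + 2 y`
agree up to order, so summing the parallelogram identity `x² + (x + 2 y)² = 2 (x + y)² + 2 y²`
gives `∑ yᵢ² = 0`. Hence every `φ` kills every `aᵢ`, which makes `aᵢ` a torsion element.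
-/

open Module Polynomial

section Torsion

lemma isOfFinAddOrder_of_forall_hom_rat_eq_zero {M : Type*} [AddCommGroup M] {m : M}
    (h : ∀ φ : M →+ ℚ, φ m = 0) : IsOfFinAddOrder m := by
  let ι : M →ₗ[ℤ] TensorProduct ℤ ℚ M := TensorProduct.mk ℤ ℚ M 1
  have : IsLocalizedModule (nonZeroDivisors ℤ) ι :=
    IsLocalization.tensorProduct_isLocalizedModule (nonZeroDivisors ℤ) ℚ
  have hι : ι m = 0 := (forall_dual_apply_eq_zero_iff ℚ (ι m)).1 fun g =>
    h (g.toAddMonoidHom.comp ι.toAddMonoidHom)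
  obtain ⟨⟨z, hz⟩, hzm⟩ := (IsLocalizedModule.eq_zero_iff (nonZeroDivisors ℤ) ι).1 hι
  exact isOfFinAddOrder_iff_zsmul_eq_zero.2 ⟨z, nonZeroDivisors.ne_zero hz, hzm⟩

lemma eq_zero_of_map_eq_map_add {ι R : Type*} [CommRing R] [LinearOrder R] [IsStrictOrderedRing R]
    {s : Multiset ι} {x y : ι → R} (h₁ : s.map x = s.map (x + y))
    (h₂ : s.map x = s.map (x + 2 • y)) {i : ι} (hi : i ∈ s) : y i = 0 := by
  let S (z : ι → R) : R := ((s.map z).map (· ^ 2)).sum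
  have S_congr {z w : ι → R} (h : s.map z = s.map w) : S z = S w :=
    congrArg (fun m => (m.map (· ^ 2)).sum) h
  have parallelogram : S x + S (x + 2 • y) = 2 * S (x + y) + 2 * S y := by
    simp only [S, Multiset.map_map, ← Multiset.sum_map_mul_left, ← Multiset.sum_map_add]
    refine congrArg Multiset.sum (Multiset.map_congr rfl fun j _ => ?_)
    simp only [Function.comp_apply, Pi.add_apply, two_nsmul]
    ring
  have hS : S y = 0 := by linarith [S_congr h₁, S_congr h₂]
  have hy : y i ^ 2 ≤ S y := by
    refine Multiset.single_le_sum ?_ _ (Multiset.mem_map_of_mem _ (Multiset.mem_map_of_mem y hi))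
    exact Multiset.forall_mem_map_iff.2 fun z _ => sq_nonneg z
  exact pow_eq_zero_iff two_ne_zero |>.1 (le_antisymm (hy.trans_eq hS) (sq_nonneg _))

lemma isOfFinOrder_of_map_eq_map_mul {ι M : Type*} [CommGroup M] {s : Multiset ι} {x y : ι → M}
    (h₁ : s.map x = s.map (x * y)) (h₂ : s.map x = s.map (x * y ^ 2)) {i : ι} (hi : i ∈ s) :
    IsOfFinOrder (y i) := by
  refine isOfFinAddOrder_ofMul_iff.1 (isOfFinAddOrder_of_forall_hom_rat_eq_zero fun φ => ?_)
  let ψ (z : ι → M) (i : ι) : ℚ := φ (.ofMul (z i))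
  have ψ_congr {z w : ι → M} (h : s.map z = s.map w) : s.map (ψ z) = s.map (ψ w) := by
    simpa only [Multiset.map_map] using! congrArg (Multiset.map fun u => φ (.ofMul u)) h
  have ψ_mul (z w : ι → M) : ψ (z * w) = ψ z + ψ w := funext fun _ => map_add φ _ _
  have ψ_sq (z : ι → M) : ψ (z ^ 2) = 2 • ψ z := funext fun _ => map_nsmul φ _ _
  refine eq_zero_of_map_eq_map_add (x := ψ x) (y := ψ y) ?_ ?_ hi
  · rw [← ψ_mul, ψ_congr h₁]
  · rw [← ψ_sq, ← ψ_mul, ψ_congr h₂]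

lemma exists_forall_pow_eq_one_of_isOfFinOrder {M : Type*} [Monoid M] (s : Finset M)
    (hs : ∀ x ∈ s, IsOfFinOrder x) : ∃ e : ℕ, 1 ≤ e ∧ ∀ x ∈ s, x ^ e = 1 :=
  ⟨∏ x ∈ s, orderOf x, Finset.prod_pos fun x hx => (hs x hx).orderOf_pos, fun _ hx =>
    orderOf_dvd_iff_pow_eq_one.1 (Finset.dvd_prod_of_mem orderOf hx)⟩

end Torsion

section Characters

lemma charpoly_eq_charpoly_restrict_mul_charpoly_mapQ {R V : Type*} [CommRing R] [IsDomain R]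
    [Infinite R] [AddCommGroup V] [Module R V] [Module.Finite R V] [Module.Free R V]
    (W : Submodule R V) [Module.Free R W] [Module.Finite R W] [Module.Free R (V ⧸ W)]
    (f : End R V) (hf : W ≤ W.comap f) :
    f.charpoly = (f.restrict hf).charpoly * (W.mapQ W f hf).charpoly := by
  refine Polynomial.funext fun c => ?_
  have hc : W ≤ W.comap (algebraMap R (End R V) c - f) := fun w hw =>
    W.sub_mem (W.smul_mem c hw) (hf hw)
  rw [eval_mul, LinearMap.eval_charpoly, LinearMap.eval_charpoly, LinearMap.eval_charpoly,
    LinearMap.det_eq_det_mul_det W _ hc]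
  congr 2
  ext
  rfl

variable {K G V : Type*} [Field K] [IsAlgClosed K] [AddCommGroup V] [Module K V]
  [FiniteDimensional K V]

lemma exists_monoidHom_forall_apply_eq_smul [CommMonoid G] [Nontrivial V]
    (ρ : Representation K G V) : ∃ χ : G →* K, ∃ v ≠ 0, ∀ g, ρ g v = χ g • v := by
  have : Nontrivial ρ.asModule := ‹Nontrivial V›
  have : FiniteDimensional K ρ.asModule := ‹FiniteDimensional K V›
  have : IsArtinian (MonoidAlgebra K G) ρ.asModule := isArtinian_of_tower K inferInstance
  obtain ⟨W, hW⟩ := IsAtomic.exists_atom (Submodule (MonoidAlgebra K G) ρ.asModule)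
  have : IsSimpleModule (MonoidAlgebra K G) W := isSimpleModule_iff_isAtom.2 hW
  have : FiniteDimensional K W := inferInstanceAs (FiniteDimensional K (W.restrictScalars K))
  obtain ⟨v, hv, hspan⟩ := finrank_eq_one_iff'.1 <|
    IsSimpleModule.finrank_eq_one_of_isMulCommutative (MonoidAlgebra K G) W K
  have hv₀ : ρ.asModuleEquiv v ≠ 0 := by simpa using hv
  have hρ (g : G) : ∃ c : K, ρ g (ρ.asModuleEquiv v) = c • ρ.asModuleEquiv v := by
    obtain ⟨c, hc⟩ := hspan (MonoidAlgebra.of K G g • v)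
    refine ⟨c, ?_⟩
    simpa [MonoidAlgebra.of_apply, Representation.single_smul] using!
      congrArg (fun w : W => ρ.asModuleEquiv w) hc.symm
  choose χ hχ using hρ
  refine ⟨⟨⟨χ, ?_⟩, fun g h => ?_⟩, _, hv₀, hχ⟩ <;> refine smul_left_injective K hv₀ ?_
  · simp [← hχ]
  · dsimp only
    rw [← hχ, map_mul, End.mul_apply, hχ h, map_smul, hχ g, smul_smul, mul_comm]

lemma charpoly_smul_one {R V : Type*} [CommRing R] [StrongRankCondition R] [AddCommGroup V]
    [Module R V] [Module.Finite R V] [Module.Free R V] (c : R) :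
    (c • (1 : End R V)).charpoly = (X - C c) ^ finrank R V := by
  have h := LinearMap.charpoly_sub_smul (0 : End R V) (-c)
  simpa [sub_eq_add_neg] using h

/-- Frobenius' theorem on the simultaneous eigenvalues of commuting endomorphisms. -/
theorem exists_multiset_charpoly_eq_prod [CommMonoid G] (ρ : Representation K G V) :
    ∃ s : Multiset (G →* K), ∀ g, (ρ g).charpoly = (s.map fun χ => X - C (χ g)).prod := by
  induction hn : finrank K V generalizing V with
  | zero =>
    refine ⟨0, fun g => ?_⟩
    have hdeg : (ρ g).charpoly.natDegree = 0 := by rw [LinearMap.charpoly_natDegree, hn]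
    simpa using eq_one_of_monic_natDegree_zero (ρ g).charpoly_monic hdeg
  | succ n ih =>
    have : Nontrivial V := nontrivial_of_finrank_eq_succ hn
    obtain ⟨χ, v, hv, hχ⟩ := exists_monoidHom_forall_apply_eq_smul ρ
    have hρ (g : G) : ∀ w ∈ K ∙ v, ρ g w = χ g • w := by
      intro w hw
      obtain ⟨c, rfl⟩ := Submodule.mem_span_singleton.1 hw
      rw [map_smul, hχ, smul_comm]
    have hle (g : G) : K ∙ v ≤ (K ∙ v).comap (ρ g) := fun w hw => by
      simpa only [Submodule.mem_comap, hρ g w hw] using Submodule.smul_mem _ (χ g) hw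
    have hquot : finrank K (V ⧸ K ∙ v) = n := by
      have := (K ∙ v).finrank_quotient_add_finrank
      rw [finrank_span_singleton hv] at this
      omega
    obtain ⟨s, hs⟩ := ih (ρ.quotient (K ∙ v) hle) hquot
    refine ⟨χ ::ₘ s, fun g => ?_⟩
    have hrestrict : (ρ g).restrict (p := K ∙ v) (hle g) = χ g • (1 : End K (K ∙ v)) :=
      LinearMap.ext fun w => Subtype.ext (hρ g w w.2)
    rw [charpoly_eq_charpoly_restrict_mul_charpoly_mapQ _ _ (hle g), hrestrict, charpoly_smul_one,
      finrank_span_singleton hv, pow_one, Multiset.map_cons, Multiset.prod_cons, ← hs]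
    rfl

lemma exists_multiset_roots_charpoly_eq_map [CommGroup G] (ρ : Representation K G V) :
    ∃ s : Multiset (G →* Kˣ), ∀ g, (ρ g).charpoly.roots = s.map fun χ => (χ g : K) := by
  obtain ⟨s, hs⟩ := exists_multiset_charpoly_eq_prod ρ
  refine ⟨s.map MonoidHom.toHomUnits, fun g => ?_⟩
  simpa [hs, Multiset.map_map] using! roots_multiset_prod_X_sub_C (s.map fun χ => χ g)

theorem isOfFinOrder_of_isRoot_charpoly [CommGroup G] (ρ : Representation K G V) {t a : G}
    (h₁ : (ρ t).charpoly = (ρ (t * a)).charpoly) (h₂ : (ρ t).charpoly = (ρ (t * a ^ 2)).charpoly)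
    {μ : K} (hμ : (ρ a).charpoly.IsRoot μ) : IsOfFinOrder μ := by
  obtain ⟨s, hs⟩ := exists_multiset_roots_charpoly_eq_map ρ
  have hμs : μ ∈ (ρ a).charpoly.roots := (mem_roots (ρ a).charpoly_monic.ne_zero).2 hμ
  obtain ⟨χ, hχ, rfl⟩ := Multiset.mem_map.1 (hs a ▸ hμs)
  have map_apply_congr {g h : G} (hgh : (ρ g).charpoly = (ρ h).charpoly) :
      s.map (fun χ => χ g) = s.map fun χ => χ h := by
    refine Multiset.map_injective Units.val_injective ?_
    simpa [Multiset.map_map, hs] using! congrArg roots hgh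
  refine Units.isOfFinOrder_val.2 <| isOfFinOrder_of_map_eq_map_mul
    (x := fun χ : G →* Kˣ => χ t) (y := fun χ => χ a) ?_ ?_ hχ
  · simpa using! map_apply_congr h₁
  · simpa using! map_apply_congr h₂

open scoped IsMulCommutative in
theorem isOfFinOrder_of_isRoot_charpoly_of_commute [Group G] (ρ : Representation K G V) {t a : G}
    (hta : Commute t a) (h₁ : (ρ t).charpoly = (ρ (t * a)).charpoly)
    (h₂ : (ρ t).charpoly = (ρ (t * a ^ 2)).charpoly) {μ : K} (hμ : (ρ a).charpoly.IsRoot μ) :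
    IsOfFinOrder μ := by
  have : IsMulCommutative (Subgroup.closure {t, a}) :=
    Subgroup.isMulCommutative_closure (by simp [hta.eq])
  exact isOfFinOrder_of_isRoot_charpoly (ρ.comp (Subgroup.closure {t, a}).subtype)
    (t := ⟨t, Subgroup.subset_closure (by simp)⟩) (a := ⟨a, Subgroup.subset_closure (by simp)⟩)
    h₁ h₂ hμ

end Characters

section Matrix

variable {F n : Type*} [Field F] [Fintype n] [DecidableEq n]

lemma isOfFinOrder_of_aeval_charpoly_eq_zero {K : Type*} [Field K] [IsAlgClosed K] [Algebra F K]
    {T A : GL n F} (hcomm : Commute T A)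
    (hTA : T.val.charpoly = (T * A).val.charpoly)
    (hTA2 : T.val.charpoly = (T * A ^ 2).val.charpoly)
    {μ : K} (hμ : aeval μ A.val.charpoly = 0) : IsOfFinOrder μ := by
  let σ : Representation K (GL n F) (n → K) :=
    (MonoidHomClass.toMonoidHom Matrix.toLinAlgEquiv').comp <|
      (algebraMap F K).mapMatrix.toMonoidHom.comp (Units.coeHom _)
  have σ_charpoly (B : GL n F) : (σ B).charpoly = B.val.charpoly.map (algebraMap F K) :=
    (Matrix.charpoly_toLin' _).trans (Matrix.charpoly_map _ _)
  refine isOfFinOrder_of_isRoot_charpoly_of_commute σ hcomm ?_ ?_ ?_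
  · rw [σ_charpoly, σ_charpoly, hTA]
  · rw [σ_charpoly, σ_charpoly, hTA2]
  · rwa [σ_charpoly, IsRoot.def, eval_map_algebraMap]

lemma charpoly_eq_of_exists_conj {T B : GL n F} (h : ∃ X : GL n F, X * T * X⁻¹ = B) :
    T.val.charpoly = B.val.charpoly := by
  obtain ⟨X, rfl⟩ := h
  rw [Units.val_mul, Units.val_mul, Matrix.coe_units_inv, Matrix.charpoly_units_conj]

theorem eigenvalues_roots_of_unity_of_conj_TA_TA2_general {T A : GL n F} (hcomm : Commute T A)
    (hTA : T.val.charpoly = (T * A).val.charpoly)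
    (hTA2 : T.val.charpoly = (T * A ^ 2).val.charpoly) :
    ∃ e : ℕ, 1 ≤ e ∧ ∀ μ : AlgebraicClosure F, aeval μ A.val.charpoly = 0 → μ ^ e = 1 := by
  classical
  obtain ⟨e, he, hpow⟩ := exists_forall_pow_eq_one_of_isOfFinOrder
    (A.val.charpoly.rootSet (AlgebraicClosure F)).toFinset fun μ hμ =>
      isOfFinOrder_of_aeval_charpoly_eq_zero hcomm hTA hTA2
        (aeval_eq_zero_of_mem_rootSet (Set.mem_toFinset.1 hμ))
  exact ⟨e, he, fun μ hμ => hpow μ <|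
    Set.mem_toFinset.2 ((mem_rootSet_of_ne A.val.charpoly_monic.ne_zero).2 hμ)⟩

end Matrix

/-- If `T, A ∈ GL(d,F)` commute and `T` is conjugate in
`GL(d,F)` both to `TA` and to `TA²`, then all eigenvalues of `A` in an
algebraic closure of `F` (i.e. all roots of its characteristic polynomial) are
roots of unity: some `e ≥ 1` has `μᵉ = 1` for every such root `μ`. -/
theorem eigenvalues_roots_of_unity_of_conj_TA_TA2
    (F : Type) [Field F] (d : ℕ) (hd : 1 ≤ d)
    (T A : GL (Fin d) F) (hcomm : Commute T A)
    (hTA : ∃ X : GL (Fin d) F, X * T * X⁻¹ = T * A)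
    (hTA2 : ∃ Y : GL (Fin d) F, Y * T * Y⁻¹ = T * A ^ 2) :
    ∃ e : ℕ, 1 ≤ e ∧ ∀ μ : AlgebraicClosure F,
      Polynomial.aeval μ (Matrix.charpoly (A : Matrix (Fin d) (Fin d) F)) = 0 →
      μ ^ e = 1 :=
  eigenvalues_roots_of_unity_of_conj_TA_TA2_general hcomm
    (charpoly_eq_of_exists_conj hTA) (charpoly_eq_of_exists_conj hTA2)
end

section
/- Let d ≥ 1, let σ be a permutation of ℤ/dℤ, and let r : ℤ/dℤ → ℝ satisfy 2·r(i+1) = r(i) + r(σ(i)) for every i ∈ ℤ/dℤ. Then r is a constant function. -/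
/-!
Permutation operators preserve the `ℓ²` norm. The relation exhibits the shift of `r` as the midpoint
of `r` and `r ∘ σ`, three vectors of equal norm; by strict convexity the midpoint of two distinct
vectors of equal norm is strictly shorter, so all three coincide. Hence `r` is invariant under the
shift, which is transitive on `ℤ/dℤ`.
-/

theorem eq_of_two_smul_eq_add_of_norm_eq {E : Type*} [NormedAddCommGroup E] [NormedSpace ℝ E]
    [StrictConvexSpace ℝ E] {x y z : E} (hx : ‖x‖ = ‖z‖) (hy : ‖y‖ = ‖z‖)
    (h : (2 : ℝ) • z = x + y) : z = x := by
  have norm_add : ‖x + y‖ = ‖x‖ + ‖y‖ := by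
    rw [← h, norm_smul, hx, hy, Real.norm_ofNat, two_mul]
  have hxy : x = y := eq_of_norm_eq_of_norm_add_eq (hx.trans hy.symm) norm_add
  rw [← hxy, ← two_smul ℝ x] at h
  exact smul_right_injective E two_ne_zero h

theorem comp_perm_eq_of_two_smul_eq_add {ι E : Type*} [Finite ι] [NormedAddCommGroup E]
    [InnerProductSpace ℝ E] {σ τ : Equiv.Perm ι} {r : ι → E}
    (h : ∀ i, (2 : ℝ) • r (τ i) = r i + r (σ i)) : r ∘ τ = r := by
  have := Fintype.ofFinite ι
  have norm_comp (π : Equiv.Perm ι) : ‖WithLp.toLp 2 (r ∘ π)‖ = ‖WithLp.toLp 2 r‖ :=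
    (LinearIsometryEquiv.piLpCongrLeft 2 ℝ E π.symm).norm_map (WithLp.toLp 2 r)
  have midpoint_relation :
      (2 : ℝ) • WithLp.toLp 2 (r ∘ τ) = WithLp.toLp 2 r + WithLp.toLp 2 (r ∘ σ) :=
    PiLp.ext h
  exact WithLp.toLp_injective 2 <| eq_of_two_smul_eq_add_of_norm_eq (norm_comp τ).symm
    ((norm_comp σ).trans (norm_comp τ).symm) midpoint_relation

theorem apply_eq_of_comp_perm_eq_of_sameCycle {ι α : Type*} {τ : Equiv.Perm ι} {f : ι → α}
    (hf : f ∘ τ = f) {i j : ι} (hij : τ.SameCycle i j) : f i = f j := by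
  have apply_eq (k : ι) : f (τ k) = f k := congrFun hf k
  have apply_symm_eq (k : ι) : f (τ.symm k) = f k := by
    simpa only [τ.apply_symm_apply] using (apply_eq (τ.symm k)).symm
  obtain ⟨n, rfl⟩ := hij
  induction n generalizing i with
  | zero => rfl
  | succ n ih => rw [zpow_add_one, Equiv.Perm.mul_apply, ← ih, apply_eq]
  | pred n ih => rw [zpow_sub_one, Equiv.Perm.mul_apply, ← ih, Equiv.Perm.inv_def, apply_symm_eq]

theorem zmod_sameCycle_addRight_one {d : ℕ} (i j : ZMod d) :
    (Equiv.addRight (1 : ZMod d)).SameCycle i j := by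
  obtain ⟨n, hn⟩ := ZMod.intCast_surjective (j - i)
  exact ⟨n, by simp [hn]⟩

theorem cyclic_mean_relation_constant_general {ι E : Type*} [Finite ι] [NormedAddCommGroup E]
    [InnerProductSpace ℝ E] {σ τ : Equiv.Perm ι} {r : ι → E}
    (h : ∀ i, (2 : ℝ) • r (τ i) = r i + r (σ i)) {i j : ι} (hij : τ.SameCycle i j) :
    r i = r j :=
  apply_eq_of_comp_perm_eq_of_sameCycle (comp_perm_eq_of_two_smul_eq_add h) hij

/-- If `d ≥ 1`, `σ` is a permutation of `ℤ/dℤ` and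
`r : ℤ/dℤ → ℝ` satisfies `2·r(i+1) = r(i) + r(σ(i))` for all `i`, then `r` is
constant. -/
theorem cyclic_mean_relation_constant
    (d : ℕ) (hd : 1 ≤ d) (σ : Equiv.Perm (ZMod d)) (r : ZMod d → ℝ)
    (h : ∀ i : ZMod d, 2 * r (i + 1) = r i + r (σ i)) :
    ∀ i j : ZMod d, r i = r j := by
  have : NeZero d := ⟨Nat.one_le_iff_ne_zero.mp hd⟩
  exact fun i j ↦ cyclic_mean_relation_constant_general h (zmod_sameCycle_addRight_one i j)
end

section
/- Let G be a group containing commuting elements T and A such that A has infinite order and such that T is conjugate in G to TA and also conjugate in G to TA². Then for every field F of positive characteristic and every d ≥ 1, there is no injective group homomorphism from G into GL(d,F). In particular, the Gersten group — the semidirect product F₃ ⋊_α ℤ, where F₃ is the free group on a, b, c and α(a) = a, α(b) = ba, α(c) = ca² — admits no injective group homomorphism into GL(d,F) for any d ≥ 1 and any field F of positive characteristic. -/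
open scoped MatrixGroups

/-!
Over an algebraically closed field of characteristic `p`, a large power `q` of `p` makes the
commuting matrices `T ^ q` and `A ^ q` simultaneously diagonalizable, because
`(f - μ) ^ q = f ^ q - μ ^ q`. If `T` is conjugate to `T * A ^ i` and to `T * A ^ j`, then the joint
eigenvalues `(l k, m k)` of `T ^ q` and `A ^ q` are such that the families `l k`, `l k * m k ^ i`
and `l k * m k ^ j` agree as multisets. Every homomorphism `φ` from the multiplicative group of the
field to `ℚ` therefore satisfies
`∑ φ (l k) ^ 2 = ∑ (φ (l k) + i * φ (m k)) ^ 2 = ∑ (φ (l k) + j * φ (m k)) ^ 2`.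
For distinct nonzero `i` and `j` this forces `∑ φ (m k) ^ 2 = 0`. As such homomorphisms detect the
elements of infinite order, every `m k` is a root of unity, and `A` has finite order.
-/

open Finset Matrix Module Module.End Polynomial SemidirectProduct

universe u

section MultisetsOfTranslates

theorem eq_zero_of_map_eq_map_add_mul {κ R : Type*} [Fintype κ] [CommRing R] [LinearOrder R]
    [IsStrictOrderedRing R] {x y : κ → R} {i j : R} (hi : i ≠ 0) (hj : j ≠ 0) (hij : i ≠ j)
    (h₁ : univ.val.map x = univ.val.map fun k ↦ x k + i * y k)
    (h₂ : univ.val.map x = univ.val.map fun k ↦ x k + j * y k) : y = 0 := by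
  have linear_relation {c : R} (hc : c ≠ 0)
      (h : univ.val.map x = univ.val.map fun k ↦ x k + c * y k) :
      2 * ∑ k, x k * y k + c * ∑ k, y k ^ 2 = 0 := by
    have sum_sq : ∑ k, x k ^ 2 = ∑ k, (x k + c * y k) ^ 2 := by
      simpa using congrArg (fun s : Multiset R ↦ (s.map (· ^ 2)).sum) h
    have expand : ∑ k, (x k + c * y k) ^ 2 =
        ∑ k, x k ^ 2 + c * (2 * ∑ k, x k * y k + c * ∑ k, y k ^ 2) := by
      simp only [mul_sum, ← sum_add_distrib]
      exact sum_congr rfl fun k _ ↦ by ring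
    exact (mul_eq_zero.1 (left_eq_add.1 (sum_sq.trans expand))).resolve_left hc
  have sum_sq_eq_zero : ∑ k, y k ^ 2 = 0 := by
    have : (i - j) * ∑ k, y k ^ 2 = 0 := by
      linear_combination linear_relation hi h₁ - linear_relation hj h₂
    exact (mul_eq_zero.1 this).resolve_left (sub_ne_zero.2 hij)
  funext k
  simpa using (sum_eq_zero_iff_of_nonneg fun k _ ↦ sq_nonneg (y k)).1 sum_sq_eq_zero k (mem_univ k)

theorem exists_addMonoidHom_rat_ne_zero {M : Type*} [AddCommGroup M] {x : M}
    (hx : ¬IsOfFinAddOrder x) : ∃ φ : M →+ ℚ, φ x ≠ 0 := by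
  obtain ⟨φ, hφ⟩ := (Baer.of_divisible ℚ).extension_property_addMonoidHom
    (zmultiplesHom M x) (injective_zsmul_iff_not_isOfFinAddOrder.2 hx) (Int.castAddHom ℚ)
  have : φ x = 1 := by simpa using DFunLike.congr_fun hφ 1
  exact ⟨φ, this ▸ one_ne_zero⟩

theorem isOfFinOrder_of_map_eq_map_mul_zpow {κ H : Type*} [Fintype κ] [CommGroup H] {l m : κ → H}
    {i j : ℤ} (hi : i ≠ 0) (hj : j ≠ 0) (hij : i ≠ j)
    (h₁ : univ.val.map l = univ.val.map (l * m ^ i))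
    (h₂ : univ.val.map l = univ.val.map (l * m ^ j)) : IsOfFinOrder m := by
  refine IsOfFinOrder.pi fun k ↦ ?_
  by_contra hk
  obtain ⟨φ, hφ⟩ := exists_addMonoidHom_rat_ne_zero (x := Additive.ofMul (m k))
    (mt isOfFinAddOrder_ofMul_iff.1 hk)
  have image_under_φ {c : ℤ} (h : univ.val.map l = univ.val.map (l * m ^ c)) :
      univ.val.map (fun k ↦ φ (.ofMul (l k))) =
        univ.val.map fun k ↦ φ (.ofMul (l k)) + (c : ℚ) * φ (.ofMul (m k)) := by
    simpa [Function.comp_def] using congrArg (Multiset.map fun a ↦ φ (.ofMul a)) h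
  exact hφ <| congrFun (eq_zero_of_map_eq_map_add_mul (by exact_mod_cast hi) (by exact_mod_cast hj)
    (by exact_mod_cast hij) (image_under_φ h₁) (image_under_φ h₂)) k

end MultisetsOfTranslates

section Diagonal

variable {n R : Type*} [Fintype n] [DecidableEq n] [CommRing R]

/-- The embedding of the diagonal torus `(Rˣ)ⁿ` into `GL n R`. -/
def diagonalGL (n R : Type*) [Fintype n] [DecidableEq n] [CommRing R] : (n → Rˣ) →* GL n R :=
  (Units.map (diagonalRingHom n R).toMonoidHom).comp MulEquiv.piUnits.symm.toMonoidHom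

theorem coe_diagonalGL (l : n → Rˣ) :
    (diagonalGL n R l : Matrix n n R) = diagonal fun k ↦ (l k : R) :=
  rfl

theorem map_eq_map_of_isConj_diagonalGL [IsDomain R] {l l' : n → Rˣ}
    (h : IsConj (diagonalGL n R l) (diagonalGL n R l')) : univ.val.map l = univ.val.map l' := by
  have roots_charpoly (l : n → Rˣ) :
      (diagonalGL n R l : Matrix n n R).charpoly.roots = (univ.val.map l).map Units.val := by
    rw [coe_diagonalGL, charpoly_diagonal, ← roots_multiset_prod_X_sub_C ((univ.val.map l).map _),
      Multiset.map_map, Multiset.map_map]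
    rfl
  obtain ⟨g, hg⟩ := isConj_iff.1 h
  refine Multiset.map_injective Units.val_injective ?_
  rw [← roots_charpoly, ← roots_charpoly, ← hg, Units.val_mul, Units.val_mul,
    coe_units_inv, charpoly_units_conj]

theorem exists_eq_conj_diagonalGL_of_basis {ι K : Type*} [Field K] (M : ι → GL n K)
    (b : Basis n K (n → K)) (c : ι → n → K) (h : ∀ i k, (M i).val *ᵥ b k = c i k • b k) :
    ∃ (P : GL n K) (χ : ι → n → Kˣ), ∀ i, M i = MulAut.conj P (diagonalGL n K (χ i)) := by
  have hc (i k) : c i k ≠ 0 := fun h0 ↦ b.ne_zero k <| by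
    apply mulVec_injective_of_isUnit (M i).isUnit
    rw [h, h0, zero_smul, mulVec_zero]
  let := (Pi.basisFun K n).invertibleToMatrix b
  refine ⟨unitOfInvertible ((Pi.basisFun K n).toMatrix b),
    fun i k ↦ Units.mk0 (c i k) (hc i k), fun i ↦ ?_⟩
  rw [MulAut.conj_apply, eq_mul_inv_iff_mul_eq]
  ext a k
  rw [Units.val_mul, Units.val_mul, coe_diagonalGL, mul_diagonal]
  simpa [Matrix.mul_apply, mulVec, dotProduct, Basis.toMatrix_apply, mul_comm] using
    congrFun (h i k) a

end Diagonal

section CommutingEndomorphisms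

variable {ι K V : Type*} [Field K] [AddCommGroup V] [Module K V] [FiniteDimensional K V]

theorem exists_basis_mem_maxGenEigenspace (f : ι → End K V)
    (hf : Pairwise fun i j ↦ Commute (f i) (f j)) (htop : ∀ i, ⨆ μ, (f i).maxGenEigenspace μ = ⊤) :
    ∃ (s : Set V) (b : Basis s K V) (χ : ι → s → K),
      ∀ i v, b v ∈ (f i).maxGenEigenspace (χ i v) := by
  have hspan : ⊤ ≤ Submodule.span K {v | ∃ χ : ι → K, ∀ i, v ∈ (f i).maxGenEigenspace (χ i)} := by
    rw [← iSup_iInf_maxGenEigenspace_eq_top_of_iSup_maxGenEigenspace_eq_top_of_commute f hf htop]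
    exact iSup_le fun χ v hv ↦ Submodule.subset_span ⟨χ, (Submodule.mem_iInf _).1 hv⟩
  choose χ hχ using fun v ↦ Basis.ofSpan_subset hspan (Set.mem_range_self v)
  exact ⟨_, Basis.ofSpan hspan, fun i v ↦ χ v i, fun i v ↦ hχ v i⟩

theorem pow_expChar_pow_apply_of_mem_maxGenEigenspace (p : ℕ) [ExpChar K p] {e : ℕ}
    (he : finrank K V ≤ p ^ e) {f : End K V} {μ : K} {v : V} (hv : v ∈ f.maxGenEigenspace μ) :
    (f ^ p ^ e) v = μ ^ p ^ e • v := by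
  obtain _ | _ := subsingleton_or_nontrivial V
  · exact Subsingleton.elim _ _
  have : ExpChar (End K V) p := expChar_of_injective_algebraMap (algebraMap K _).injective p
  rw [maxGenEigenspace_eq_genEigenspace_finrank] at hv
  have hv : ((f - μ • 1) ^ p ^ e) v = 0 :=
    mem_genEigenspace_nat.1 ((f.genEigenspace μ).monotone (by exact_mod_cast he) hv)
  rw [sub_pow_expChar_pow_of_commute _ _ ((Commute.one_right f).smul_right μ),
    _root_.smul_pow, one_pow] at hv
  simpa [sub_eq_zero] using hv

end CommutingEndomorphisms

section GeneralLinearGroup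

variable {n : Type*} [Fintype n] [DecidableEq n] (p : ℕ) [Fact p.Prime]

theorem exists_pow_eq_conj_diagonalGL {ι K : Type*} [Field K] [IsAlgClosed K] [CharP K p]
    (M : ι → GL n K) (hM : Pairwise fun i j ↦ Commute (M i) (M j)) :
    ∃ q ≠ 0, ∃ (P : GL n K) (χ : ι → n → Kˣ),
      ∀ i, M i ^ q = MulAut.conj P (diagonalGL n K (χ i)) := by
  have : ExpChar K p := .prime Fact.out
  let f (i : ι) : End K (n → K) := toLinAlgEquiv' (M i).val
  obtain ⟨s, b, χ, hχ⟩ := exists_basis_mem_maxGenEigenspace f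
    (fun i j hij ↦ ((hM hij).map (Units.coeHom _)).map toLinAlgEquiv')
    fun i ↦ iSup_maxGenEigenspace_eq_top (f i)
  have hq : finrank K (n → K) ≤ p ^ finrank K (n → K) :=
    (Nat.lt_pow_self (Fact.out : p.Prime).one_lt).le
  let e := b.indexEquiv (Pi.basisFun K n)
  refine ⟨p ^ finrank K (n → K), pow_ne_zero _ (Fact.out : p.Prime).ne_zero,
    exists_eq_conj_diagonalGL_of_basis _ (b.reindex e)
      (fun i k ↦ χ i (e.symm k) ^ p ^ finrank K (n → K)) fun i k ↦ ?_⟩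
  have := pow_expChar_pow_apply_of_mem_maxGenEigenspace p hq (hχ i (e.symm k))
  rwa [← map_pow, toLinAlgEquiv'_apply, ← Units.val_pow_eq_pow_val, ← b.reindex_apply e] at this

theorem isOfFinOrder_of_isConj_mul_zpow {K : Type*} [Field K] [IsAlgClosed K]
    [CharP K p] {T A : GL n K} (hTA : Commute T A) {i j : ℤ} (hi : i ≠ 0) (hj : j ≠ 0) (hij : i ≠ j)
    (h₁ : IsConj T (T * A ^ i)) (h₂ : IsConj T (T * A ^ j)) : IsOfFinOrder A := by
  have pairwise_commute : Pairwise fun a b ↦ Commute (![T, A] a) (![T, A] b) := by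
    simp [Pairwise, Fin.forall_fin_two, hTA, hTA.symm]
  obtain ⟨q, hq, P, χ, hχ⟩ := exists_pow_eq_conj_diagonalGL p ![T, A] pairwise_commute
  have hT : T ^ q = MulAut.conj P (diagonalGL n K (χ 0)) := hχ 0
  have hA : A ^ q = MulAut.conj P (diagonalGL n K (χ 1)) := hχ 1
  have eigenvalues_eq {c : ℤ} (h : IsConj T (T * A ^ c)) :
      univ.val.map (χ 0) = univ.val.map (χ 0 * χ 1 ^ c) := by
    have hTAc : (T * A ^ c) ^ q = MulAut.conj P (diagonalGL n K (χ 0 * χ 1 ^ c)) := by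
      rw [(hTA.zpow_right c).mul_pow, ← zpow_natCast (A ^ c), zpow_comm, zpow_natCast, hT, hA]
      simp only [map_mul, map_zpow]
    exact map_eq_map_of_isConj_diagonalGL <|
      (isConj_iff.2 ⟨P, hT.symm⟩).trans <| (h.pow q).trans (isConj_iff.2 ⟨P, hTAc.symm⟩).symm
  have hχ₁ : IsOfFinOrder (χ 1) :=
    isOfFinOrder_of_map_eq_map_mul_zpow hi hj hij (eigenvalues_eq h₁) (eigenvalues_eq h₂)
  have hAq : IsOfFinOrder (A ^ q) :=
    (isConj_iff.2 ⟨P, hA.symm⟩).isOfFinOrder ((diagonalGL n K).isOfFinOrder hχ₁)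
  exact hAq.of_pow hq

theorem isOfFinOrder_of_isConj_mul_zpow_of_injective {G R : Type*} [Group G] [CommRing R]
    [IsDomain R] [CharP R p] {ρ : G →* GL n R} (hρ : Function.Injective ρ) {T A : G}
    (hTA : Commute T A) {i j : ℤ} (hi : i ≠ 0) (hj : j ≠ 0) (hij : i ≠ j)
    (h₁ : IsConj T (T * A ^ i)) (h₂ : IsConj T (T * A ^ j)) : IsOfFinOrder A := by
  let K := AlgebraicClosure (FractionRing R)
  let f : R →+* K := (algebraMap (FractionRing R) K).comp (algebraMap R (FractionRing R))
  have hf : Function.Injective f :=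
    (algebraMap (FractionRing R) K).injective.comp (IsFractionRing.injective R _)
  have : CharP K p := charP_of_injective_ringHom hf p
  let ψ : G →* GL n K := (Matrix.GeneralLinearGroup.map f).comp ρ
  have hψ : Function.Injective ψ := (Units.map_injective (Matrix.map_injective hf)).comp hρ
  have isConj_image {c : ℤ} (h : IsConj T (T * A ^ c)) : IsConj (ψ T) (ψ T * ψ A ^ c) := by
    simpa only [map_mul, map_zpow] using ψ.map_isConj h
  exact hψ.isOfFinOrder_iff.1 <| isOfFinOrder_of_isConj_mul_zpow p (hTA.map ψ)
    hi hj hij (isConj_image h₁) (isConj_image h₂)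

end GeneralLinearGroup

section SemidirectProduct

variable {N H : Type*} [Group N] [Group H] {φ : H →* MulAut N} {t : H} {x y : N}

theorem commute_inr_inl_of_apply_eq (hy : φ t y = y) : Commute (inr t : N ⋊[φ] H) (inl y) := by
  rw [commute_iff_eq, ← mul_inv_eq_iff_eq_mul, ← map_inv, ← inl_aut, hy]

theorem isConj_inr_inr_mul_inl (hx : φ t x = x * y) (hy : φ t y = y) :
    IsConj (inr t : N ⋊[φ] H) (inr t * inl y) := by
  refine isConj_iff.2 ⟨inl x⁻¹, ?_⟩
  have : (inr t * inl x : N ⋊[φ] H) = inl x * inl y * inr t := by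
    rw [← map_mul, ← hx, inl_aut, map_inv, inv_mul_cancel_right]
  rw [map_inv, inv_inv, mul_assoc, this, mul_assoc, inv_mul_cancel_left,
    (commute_inr_inl_of_apply_eq hy).eq]

end SemidirectProduct

theorem not_linear_pos_char_of_conj_TA_TA2_and_gersten_general (p : ℕ) [Fact p.Prime]
    {R : Type*} [CommRing R] [IsDomain R] [CharP R p] {n : Type*} [Fintype n] [DecidableEq n]
    {i j : ℤ} (hi : i ≠ 0) (hj : j ≠ 0) (hij : i ≠ j) :
    (∀ (G : Type u) [Group G] (T A : G), Commute T A → ¬IsOfFinOrder A →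
      IsConj T (T * A ^ i) → IsConj T (T * A ^ j) →
        ∀ ρ : G →* GL n R, ¬Function.Injective ρ) ∧
    (∀ (N H : Type u) [Group N] [Group H] (φ : H →* MulAut N) (t : H) (a b c : N),
      ¬IsOfFinOrder a → φ t a = a → φ t b = b * a ^ i → φ t c = c * a ^ j →
        ∀ ρ : N ⋊[φ] H →* GL n R, ¬Function.Injective ρ) := by
  refine ⟨fun G _ T A hTA hA h₁ h₂ ρ hρ ↦
    hA (isOfFinOrder_of_isConj_mul_zpow_of_injective p hρ hTA hi hj hij h₁ h₂),
    fun N H _ _ φ t a b c ha hφa hφb hφc ρ hρ ↦ ?_⟩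
  have isConj_inr {x : N} {k : ℤ} (hx : φ t x = x * a ^ k) :
      IsConj (inr t : N ⋊[φ] H) (inr t * inl a ^ k) := by
    rw [← map_zpow]
    exact isConj_inr_inr_mul_inl hx (by rw [map_zpow, hφa])
  exact ha <| inl_injective.isOfFinOrder_iff.1 <|
    isOfFinOrder_of_isConj_mul_zpow_of_injective p hρ (commute_inr_inl_of_apply_eq hφa)
      hi hj hij (isConj_inr hφb) (isConj_inr hφc)

/-- If a group `G` has commuting elements `T, A` with `A` of
infinite order and `T` conjugate both to `TA` and to `TA²`, then `G` embeds in
`GL(d,F)` for no `d ≥ 1` and no field `F` of positive characteristic. In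
particular the Gersten group `F₃ ⋊_α ℤ` (where `α(a) = a`, `α(b) = ba`,
`α(c) = ca²`, with `a = of 0`, `b = of 1`, `c = of 2`) is not linear over any
field of positive characteristic. -/
theorem not_linear_pos_char_of_conj_TA_TA2_and_gersten :
    (∀ (G : Type) [Group G] (T A : G), Commute T A →
      (∀ n : ℤ, n ≠ 0 → A ^ n ≠ 1) →
      (∃ g : G, g * T * g⁻¹ = T * A) →
      (∃ h : G, h * T * h⁻¹ = T * A ^ 2) →
      ∀ (F : Type) [Field F] (p : ℕ), p ≠ 0 → CharP F p →
        ∀ d : ℕ, 1 ≤ d →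
          ¬ ∃ ρ : G →* GL (Fin d) F, Function.Injective ρ) ∧
    (∀ α : MulAut (FreeGroup (Fin 3)),
      α (FreeGroup.of 0) = FreeGroup.of 0 →
      α (FreeGroup.of 1) = FreeGroup.of 1 * FreeGroup.of 0 →
      α (FreeGroup.of 2) = FreeGroup.of 2 * FreeGroup.of 0 ^ 2 →
      ∀ (F : Type) [Field F] (p : ℕ), p ≠ 0 → CharP F p →
        ∀ d : ℕ, 1 ≤ d →
          ¬ ∃ ρ : (FreeGroup (Fin 3) ⋊[zpowersHom (MulAut (FreeGroup (Fin 3))) α]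
              Multiplicative ℤ) →* GL (Fin d) F,
            Function.Injective ρ) := by
  refine ⟨fun G _ T A hTA hA h₁ h₂ F _ p hp _ d _ ⟨ρ, hρ⟩ ↦ ?_,
    fun α ha hb hc F _ p hp _ d _ ⟨ρ, hρ⟩ ↦ ?_⟩
  all_goals have : Fact p.Prime := ⟨CharP.char_prime_of_ne_zero F hp⟩
  · exact (not_linear_pos_char_of_conj_TA_TA2_and_gersten_general p
      one_ne_zero two_ne_zero (by decide)).1 G T A hTA
      (by simpa [isOfFinOrder_iff_zpow_eq_one, not_imp_not] using hA)
      (by simpa [isConj_iff] using h₁) (by exact_mod_cast isConj_iff.2 h₂) ρ hρ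
  · exact (not_linear_pos_char_of_conj_TA_TA2_and_gersten_general p
      one_ne_zero two_ne_zero (by decide)).2 _ _ _ (.ofAdd 1) (.of 0) (.of 1) (.of 2)
      (not_isOfFinOrder_of_isMulTorsionFree (FreeGroup.of_ne_one 0))
      (by simpa) (by simpa) (by simpa) ρ hρ
end
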